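/- For the alternating sum-of-divisors function β(n) = ∑_{d | n} d·(−1)^{Ω(n/d)}, one has ∑_{n ≤ x} β(⌊x/n⌋)/⌊x/n⌋ = x · ∑_{m ≥ 1} β(m)/(m²(m+1)) + O(x^{1/3} log x) as x → ∞. -/

import Mathlib

open Filter Finset

/-- The alternating sum-of-divisors function `β(n) = ∑_{d ∣ n} d · (−1)^{Ω(n/d)} = id ∗ λ`,
where `Ω` is the number of prime factors with multiplicity. -/
noncomputable def altSigma (n : ℕ) : ℝ :=
  ∑ d ∈ n.divisors, (d : ℝ) * (-1 : ℝ) ^ (ArithmeticFunction.cardFactors (n / d))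

/-- The additive character `t ↦ exp(2πit)`. -/
noncomputable def unitExp (t : ℝ) : ℂ := Complex.exp (Complex.I * ((2 * Real.pi * t : ℝ) : ℂ))

lemma unitExp_eq_cos_add_sin (t : ℝ) :
    unitExp t = (Real.cos (2 * Real.pi * t) : ℂ) + (Real.sin (2 * Real.pi * t) : ℂ) * Complex.I := by
  rw [unitExp, mul_comm, Complex.exp_mul_I, Complex.ofReal_cos, Complex.ofReal_sin]

lemma unitExp_re (t : ℝ) : (unitExp t).re = Real.cos (2 * Real.pi * t) := by
  rw [unitExp_eq_cos_add_sin]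
  simp [-Complex.ofReal_cos, -Complex.ofReal_sin]

lemma norm_unitExp (t : ℝ) : ‖unitExp t‖ = 1 := by
  rw [unitExp, mul_comm, Complex.norm_exp_ofReal_mul_I]

lemma unitExp_add (s t : ℝ) : unitExp (s + t) = unitExp s * unitExp t := by
  rw [unitExp, unitExp, unitExp, ← Complex.exp_add]
  congr 1
  push_cast
  ring

lemma unitExp_intCast (v : ℤ) : unitExp v = 1 := by
  rw [unitExp, Complex.exp_eq_one_iff]
  exact ⟨v, by push_cast; ring⟩

lemma norm_unitExp_sub_one_le (t : ℝ) : ‖unitExp t - 1‖ ≤ 2 * Real.pi * |t| := by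
  have h := Real.norm_exp_I_mul_ofReal_sub_one_le (x := 2 * Real.pi * t)
  rwa [Real.norm_eq_abs, abs_mul, abs_of_pos (by positivity : 0 < 2 * Real.pi)] at h

lemma two_mul_le_sin_pi_mul {δ u : ℝ} (hδ : 0 < δ) (h₁ : δ ≤ u) (h₂ : u ≤ 1 - δ) :
    2 * δ ≤ Real.sin (Real.pi * u) := by
  have hπ := Real.pi_pos
  rcases le_total u (1 / 2) with h | h
  · have := Real.mul_le_sin (x := Real.pi * u) (by nlinarith) (by nlinarith)
    have e : 2 / Real.pi * (Real.pi * u) = 2 * u := by field_simp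
    linarith
  · have := Real.mul_le_sin (x := Real.pi - Real.pi * u) (by nlinarith) (by nlinarith)
    have e : 2 / Real.pi * (Real.pi - Real.pi * u) = 2 * (1 - u) := by field_simp
    rw [Real.sin_pi_sub] at this
    linarith

lemma cos_div_sin_antitone {a b : ℝ} (ha : 0 < a) (hab : a ≤ b) (hb : b < Real.pi) :
    Real.cos b / Real.sin b ≤ Real.cos a / Real.sin a := by
  have hsa : 0 < Real.sin a := Real.sin_pos_of_pos_of_lt_pi ha (by linarith)
  have hsb : 0 < Real.sin b := Real.sin_pos_of_pos_of_lt_pi (by linarith) hb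
  have h : 0 ≤ Real.sin (b - a) :=
    Real.sin_nonneg_of_nonneg_of_le_pi (by linarith) (by linarith)
  rw [Real.sin_sub] at h
  rw [div_le_div_iff₀ hsb hsa]
  linarith

/-- Abel summation for `∑ (z k - z (k + 1)) C k` when `C k = (1 + i c k) / 2` with `c` decreasing. -/
lemma norm_sum_add_le_of_telescoping (z : ℕ → ℂ) (c : ℕ → ℝ) (n : ℕ) (hz : ∀ k, ‖z k‖ = 1)
    (hc : ∀ k < n, c (k + 1) ≤ c k)
    (hzc : ∀ k ≤ n, (1 + Complex.I * c k) / 2 * (z k - z (k + 1)) = z k) :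
    ‖∑ k ∈ range (n + 1), z k + (1 + Complex.I * c n) / 2 * z (n + 1)‖
      ≤ ‖(1 + Complex.I * c 0) / 2‖ + (c 0 - c n) / 2 := by
  induction n with
  | zero =>
    have h := hzc 0 le_rfl
    have e : ∑ k ∈ range (0 + 1), z k + (1 + Complex.I * c 0) / 2 * z (0 + 1)
        = (1 + Complex.I * c 0) / 2 * z 0 := by
      simp only [zero_add, sum_range_one] at h ⊢
      linear_combination -h
    rw [e, norm_mul, hz]
    simp
  | succ n ih =>
    have ih := ih (fun k hk => hc k (by omega)) (fun k hk => hzc k (by omega))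
    have h := hzc (n + 1) le_rfl
    have e : ∑ k ∈ range (n + 1 + 1), z k + (1 + Complex.I * c (n + 1)) / 2 * z (n + 1 + 1)
        = (∑ k ∈ range (n + 1), z k + (1 + Complex.I * c n) / 2 * z (n + 1))
          + Complex.I * ((c (n + 1) - c n : ℝ) : ℂ) / 2 * z (n + 1) := by
      rw [sum_range_succ]
      push_cast
      linear_combination -h
    have hn : ‖Complex.I * ((c (n + 1) - c n : ℝ) : ℂ) / 2 * z (n + 1)‖
        = (c n - c (n + 1)) / 2 := by
      rw [norm_mul, hz, mul_one, norm_div, norm_mul, Complex.norm_I, one_mul, Complex.norm_real,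
        Real.norm_eq_abs, abs_of_nonpos (by linarith [hc n (by omega)])]
      norm_num
    rw [e]
    refine (norm_add_le _ _).trans ?_
    rw [hn]
    linarith

/-- The Kusmin–Landau inequality, in terms of the first differences of the phase. -/
lemma norm_sum_unitExp_le_of_differences (g : ℕ → ℝ) (v : ℤ) {δ : ℝ} (hδ : 0 < δ) (n : ℕ)
    (hg : ∀ k ≤ n, v + δ ≤ g (k + 1) - g k ∧ g (k + 1) - g k ≤ v + 1 - δ)
    (hmono : ∀ k < n, g (k + 1) - g k ≤ g (k + 1 + 1) - g (k + 1)) :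
    ‖∑ k ∈ range (n + 1), unitExp (g k)‖ ≤ 1 / δ := by
  set u : ℕ → ℝ := fun k => g (k + 1) - g k - v with hu
  have hu₁ : ∀ k ≤ n, δ ≤ u k := fun k hk => by have := hg k hk; simp only [hu]; linarith
  have hu₂ : ∀ k ≤ n, u k ≤ 1 - δ := fun k hk => by have := hg k hk; simp only [hu]; linarith
  set s : ℕ → ℝ := fun k => Real.sin (Real.pi * u k) with hs
  set c : ℕ → ℝ := fun k => Real.cos (Real.pi * u k) / s k with hc
  have hsp : ∀ k ≤ n, 2 * δ ≤ s k := fun k hk => two_mul_le_sin_pi_mul hδ (hu₁ k hk) (hu₂ k hk)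
  have hcabs : ∀ k ≤ n, |c k| ≤ 1 / (2 * δ) := fun k hk => by
    have h0 := hsp k hk
    simp only [hc]
    rw [abs_div, abs_of_pos (by linarith : 0 < s k)]
    exact div_le_div₀ zero_le_one (Real.abs_cos_le_one _) (by linarith) h0
  have hC : ∀ k ≤ n, ‖(1 + Complex.I * c k) / 2‖ ≤ 1 / (4 * δ) := fun k hk => by
    have h0 := hsp k hk
    have hs0 : 0 < s k := by linarith
    have hsq : ‖(1 + Complex.I * (c k : ℂ)) / 2‖ ^ 2 = (1 / (2 * s k)) ^ 2 := by
      have h1 := Real.sin_sq_add_cos_sq (Real.pi * u k)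
      have h2 : ∀ r : ℝ, ‖(1 + Complex.I * (r : ℂ)) / 2‖ ^ 2 = (1 + r ^ 2) / 4 := fun r => by
        rw [Complex.sq_norm, Complex.normSq_apply]
        simp
        ring
      rw [h2]
      simp only [hc]
      field_simp
      simp only [hs]
      linarith
    have : ‖(1 + Complex.I * (c k : ℂ)) / 2‖ = 1 / (2 * s k) :=
      (sq_eq_sq₀ (norm_nonneg _) (by positivity)).1 hsq
    rw [this]
    exact one_div_le_one_div_of_le (by positivity) (by linarith)
  have key := norm_sum_add_le_of_telescoping (fun k => unitExp (g k)) c n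
    (fun k => norm_unitExp _)
    (fun k hk => by
      have h1 := hu₁ k hk.le
      have h2 := hu₂ (k + 1) hk
      have h3 := hmono k hk
      have hπ := Real.pi_pos
      refine cos_div_sin_antitone (mul_pos hπ (by linarith)) ?_ ?_
      · exact mul_le_mul_of_nonneg_left (by simp only [hu]; linarith) hπ.le
      · nlinarith)
    (fun k hk => by
      have hs0 : s k ≠ 0 := by have := hsp k hk; linarith
      have e1 : unitExp (g (k + 1)) = unitExp (g k) * unitExp (u k) := by
        have : g (k + 1) = g k + u k + (v : ℝ) := by simp only [hu]; ring
        rw [this, unitExp_add, unitExp_add, unitExp_intCast, mul_one]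
      have e2 : (1 + Complex.I * (c k : ℂ)) / 2 * (1 - unitExp (u k)) = 1 := by
        rw [unitExp_eq_cos_add_sin, mul_assoc 2 Real.pi, Real.cos_two_mul, Real.sin_two_mul]
        have h1 : ((s k : ℝ) : ℂ) ^ 2 + ((Real.cos (Real.pi * u k) : ℝ) : ℂ) ^ 2 = 1 := by
          exact_mod_cast Real.sin_sq_add_cos_sq (Real.pi * u k)
        have hs1 : ((s k : ℝ) : ℂ) ≠ 0 := by exact_mod_cast hs0
        simp only [hc]
        change (1 + Complex.I * ((Real.cos (Real.pi * u k) / s k : ℝ) : ℂ)) / 2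
          * (1 - (((2 * Real.cos (Real.pi * u k) ^ 2 - 1 : ℝ) : ℂ)
            + ((2 * s k * Real.cos (Real.pi * u k) : ℝ) : ℂ) * Complex.I)) = 1
        push_cast [-Complex.ofReal_cos]
        generalize ((Real.cos (Real.pi * u k) : ℝ) : ℂ) = C at *
        generalize ((s k : ℝ) : ℂ) = S at *
        field_simp
        have hI := Complex.I_sq
        linear_combination (-2 * S * C ^ 2) * hI + (-2 * Complex.I * C) * h1
      linear_combination unitExp (g k) * e2 - (1 + Complex.I * (c k : ℂ)) / 2 * e1)
  have h0 := hC 0 (Nat.zero_le _)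
  have hn := hC n le_rfl
  have a0 := (abs_le.1 (hcabs 0 (Nat.zero_le _))).2
  have an := (abs_le.1 (hcabs n le_rfl)).1
  have tri : ‖∑ k ∈ range (n + 1), unitExp (g k)‖ ≤
      ‖∑ k ∈ range (n + 1), unitExp (g k) + (1 + Complex.I * c n) / 2 * unitExp (g (n + 1))‖
        + ‖(1 + Complex.I * (c n : ℂ)) / 2‖ := by
    have := norm_sub_le (∑ k ∈ range (n + 1), unitExp (g k)
      + (1 + Complex.I * c n) / 2 * unitExp (g (n + 1)))
      ((1 + Complex.I * c n) / 2 * unitExp (g (n + 1)))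
    rwa [add_sub_cancel_right, norm_mul _ (unitExp _), norm_unitExp, mul_one] at this
  have e : 1 / δ = 1 / (4 * δ) + 1 / (4 * δ) + (1 / (2 * δ) + 1 / (2 * δ)) / 2 := by
    field_simp
    norm_num
  linarith

lemma card_le_of_separated {D : ℕ → ℝ} {S : Finset ℕ} {μ η p : ℝ} (hμ : 0 < μ) (hη : 0 ≤ η)
    (hD : ∀ i ∈ S, ∀ j ∈ S, i ≤ j → μ * ((j : ℝ) - i) ≤ D j - D i)
    (hS : ∀ i ∈ S, p ≤ D i ∧ D i ≤ p + η) : (S.card : ℝ) ≤ η / μ + 1 := by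
  rcases S.eq_empty_or_nonempty with rfl | hne
  · simp only [card_empty, Nat.cast_zero]
    positivity
  · have hi := S.min'_mem hne
    have hj := S.max'_mem hne
    have hij : S.min' hne ≤ S.max' hne := S.min'_le _ hj
    have hsub : S ⊆ Icc (S.min' hne) (S.max' hne) := fun k hk =>
      mem_Icc.2 ⟨S.min'_le _ hk, S.le_max' _ hk⟩
    have hcard := card_le_card hsub
    rw [Nat.card_Icc] at hcard
    have h1 : (S.card : ℝ) ≤ (S.max' hne : ℝ) + 1 - S.min' hne := by
      have : S.card + S.min' hne ≤ S.max' hne + 1 := by omega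
      have : ((S.card + S.min' hne : ℕ) : ℝ) ≤ ((S.max' hne + 1 : ℕ) : ℝ) := by exact_mod_cast this
      push_cast at this
      linarith
    have h2 := hD _ hi _ hj hij
    have h3 := hS _ hi
    have h4 := hS _ hj
    have h5 : (S.max' hne : ℝ) - S.min' hne ≤ η / μ := by
      rw [le_div_iff₀ hμ]
      linarith
    linarith

lemma norm_sum_unitExp_le_card (S : Finset ℕ) (g : ℕ → ℝ) :
    ‖∑ k ∈ S, unitExp (g k)‖ ≤ S.card := by
  refine (norm_sum_le _ _).trans ?_
  simp [norm_unitExp]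

/-- The second-derivative test for exponential sums, in terms of the first differences `D` of the
phase: `D` grows at rate at least `μ` and varies by at most `V`. -/
lemma norm_sum_unitExp_le_of_second_differences (g : ℕ → ℝ) (a b : ℕ) {μ V δ : ℝ} (hμ : 0 < μ)
    (hδ : 0 < δ) (hV0 : 0 ≤ V)
    (hlow : ∀ i j, a ≤ i → i ≤ j → j < b →
      μ * ((j : ℝ) - i) ≤ (g (j + 1) - g j) - (g (i + 1) - g i))
    (hV : ∀ i j, a ≤ i → i ≤ j → j < b → (g (j + 1) - g j) - (g (i + 1) - g i) ≤ V) :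
    ‖∑ k ∈ Ico a b, unitExp (g k)‖ ≤ (V + 2) * (1 / δ + 2 * (δ / μ + 1)) := by
  set D : ℕ → ℝ := fun k => g (k + 1) - g k with hD
  have hmono : ∀ i j, a ≤ i → i ≤ j → j < b → D i ≤ D j := fun i j hi hij hj => by
    have h1 := hlow i j hi hij hj
    have h2 : (0 : ℝ) ≤ (j : ℝ) - i := sub_nonneg.2 (by exact_mod_cast hij)
    have := mul_nonneg hμ.le h2
    simp only [hD]
    linarith
  rcases le_or_gt b a with hba | hab
  · rw [Ico_eq_empty_of_le hba, sum_empty, norm_zero]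
    positivity
  set T : Finset ℤ := Icc ⌊D a⌋ ⌊D (b - 1)⌋ with hT
  have hmaps : ∀ k ∈ Ico a b, ⌊D k⌋ ∈ T := fun k hk => by
    rw [mem_Ico] at hk
    exact mem_Icc.2 ⟨Int.floor_le_floor (hmono a k le_rfl hk.1 hk.2),
      Int.floor_le_floor (hmono k (b - 1) hk.1 (by omega) (by omega))⟩
  have hTcard : (T.card : ℝ) ≤ V + 2 := by
    have hle : ⌊D a⌋ ≤ ⌊D (b - 1)⌋ :=
      Int.floor_le_floor (hmono a (b - 1) le_rfl (by omega) (by omega))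
    have h1 : (T.card : ℤ) = ⌊D (b - 1)⌋ + 1 - ⌊D a⌋ := by
      rw [hT, Int.card_Icc, Int.toNat_of_nonneg (by omega)]
    have h2 : (T.card : ℝ) = (⌊D (b - 1)⌋ : ℝ) + 1 - ⌊D a⌋ := by exact_mod_cast h1
    have h3 := hV a (b - 1) le_rfl (by omega) (by omega)
    have h4 := Int.floor_le (D (b - 1))
    have h5 := Int.lt_floor_add_one (D a)
    simp only [hD] at *
    linarith
  have hfib : ∀ v ∈ T, ‖∑ k ∈ Ico a b with ⌊D k⌋ = v, unitExp (g k)‖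
      ≤ 1 / δ + 2 * (δ / μ + 1) := by
    intro v _
    set F : Finset ℕ := {k ∈ Ico a b | ⌊D k⌋ = v} with hF
    have hFmem : ∀ k ∈ F, a ≤ k ∧ k < b ∧ (v : ℝ) ≤ D k ∧ D k < v + 1 := fun k hk => by
      rw [hF, mem_filter, mem_Ico, Int.floor_eq_iff] at hk
      exact ⟨hk.1.1, hk.1.2, hk.2.1, hk.2.2⟩
    set P : ℕ → Prop := fun k => (v : ℝ) + δ ≤ D k ∧ D k ≤ v + 1 - δ with hP
    classical
    rw [← sum_filter_add_sum_filter_not F P]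
    refine (norm_add_le _ _).trans (add_le_add ?_ ?_)
    · set G : Finset ℕ := F.filter P with hG
      rcases G.eq_empty_or_nonempty with he | hne
      · rw [he, sum_empty, norm_zero]
        positivity
      · set i := G.min' hne with hi
        set j := G.max' hne with hj
        have hiG : i ∈ G := G.min'_mem hne
        have hjG : j ∈ G := G.max'_mem hne
        have hij : i ≤ j := G.min'_le _ hjG
        obtain ⟨hiF, hiP⟩ := mem_filter.1 hiG
        obtain ⟨hjF, hjP⟩ := mem_filter.1 hjG
        have hi' := hFmem i hiF
        have hj' := hFmem j hjF
        have hbetween : ∀ k, i ≤ k → k ≤ j → P k := fun k h1 h2 =>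
          ⟨hiP.1.trans (hmono i k hi'.1 h1 (by omega)),
            (hmono k j (by omega) h2 hj'.2.1).trans hjP.2⟩
        have hGeq : G = Ico i (j + 1) := by
          ext k
          constructor
          · intro hk
            exact mem_Ico.2 ⟨G.min'_le _ hk, Nat.lt_succ_of_le (G.le_max' _ hk)⟩
          · intro hk
            rw [mem_Ico] at hk
            have hPk := hbetween k hk.1 (by omega)
            refine mem_filter.2 ⟨?_, hPk⟩
            rw [hF, mem_filter, mem_Ico, Int.floor_eq_iff]
            have h1 := hPk.1
            have h2 := hPk.2
            exact ⟨⟨by omega, by omega⟩, by linarith, by linarith⟩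
        rw [hGeq, sum_Ico_eq_sum_range, show j + 1 - i = (j - i) + 1 by omega]
        refine norm_sum_unitExp_le_of_differences (fun k => g (i + k)) v hδ (j - i) ?_ ?_
        · intro k hk
          exact hbetween (i + k) (by omega) (by omega)
        · intro k hk
          exact hmono (i + k) (i + k + 1) (by omega) (by omega) (by omega)
    · refine (norm_sum_unitExp_le_card _ _).trans ?_
      have hsub : F.filter (fun k => ¬ P k) ⊆
          F.filter (fun k => D k ≤ v + δ) ∪ F.filter (fun k => v + 1 - δ ≤ D k) := by
        intro k hk
        rw [mem_filter] at hk
        rw [mem_union]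
        by_cases h : D k ≤ v + δ
        · exact Or.inl (mem_filter.2 ⟨hk.1, h⟩)
        · refine Or.inr (mem_filter.2 ⟨hk.1, ?_⟩)
          by_contra h'
          exact hk.2 ⟨by linarith, by linarith⟩
      have hsep : ∀ Q : ℕ → Prop, ∀ i ∈ F.filter Q, ∀ j ∈ F.filter Q, i ≤ j →
          μ * ((j : ℝ) - i) ≤ D j - D i := fun Q i hi j hj hij =>
        hlow i j (hFmem i (mem_filter.1 hi).1).1 hij (hFmem j (mem_filter.1 hj).1).2.1
      have c1 : ((F.filter (fun k => D k ≤ v + δ)).card : ℝ) ≤ δ / μ + 1 :=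
        card_le_of_separated (p := v) hμ hδ.le (hsep _) fun i hi =>
          ⟨(hFmem i (mem_filter.1 hi).1).2.2.1, (mem_filter.1 hi).2⟩
      have c2 : ((F.filter (fun k => v + 1 - δ ≤ D k)).card : ℝ) ≤ δ / μ + 1 :=
        card_le_of_separated (p := v + 1 - δ) hμ hδ.le (hsep _) fun i hi =>
          ⟨(mem_filter.1 hi).2, by linarith [(hFmem i (mem_filter.1 hi).1).2.2.2]⟩
      have c3 := (card_le_card hsub).trans (card_union_le _ _)
      have c4 : ((F.filter (fun k => ¬ P k)).card : ℝ) ≤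
          ((F.filter (fun k => D k ≤ v + δ)).card : ℝ)
            + ((F.filter (fun k => v + 1 - δ ≤ D k)).card : ℝ) := by exact_mod_cast c3
      linarith
  rw [← sum_fiberwise_of_maps_to hmaps]
  refine (norm_sum_le_of_le _ hfib).trans ?_
  rw [sum_const, nsmul_eq_mul]
  exact mul_le_mul_of_nonneg_right hTcard (by positivity)

lemma first_difference_div {Y θ : ℝ} (hθ : 0 ≤ θ) {k : ℕ} (hk : 1 ≤ k) :
    Y / (((k + 1 : ℕ) : ℝ) + θ) - Y / ((k : ℝ) + θ)
      = -(Y / (((k : ℝ) + θ) * ((k : ℝ) + 1 + θ))) := by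
  have : (1 : ℝ) ≤ k := by exact_mod_cast hk
  push_cast
  field_simp
  ring

/-- An exponential sum with phase `Y / (k + θ)` over part of a dyadic block. -/
lemma norm_sum_unitExp_div_le {Y θ : ℝ} (hY : 0 < Y) (hθ0 : 0 ≤ θ) (hθ1 : θ ≤ 1) {N a b : ℕ}
    (hN : 1 ≤ N) (ha : N ≤ a) (hb : b ≤ 2 * N) :
    ‖∑ k ∈ Ico a b, unitExp (Y / (k + θ))‖
      ≤ 16 * Real.sqrt (Y / N) + 32 * Real.sqrt (N ^ 3 / Y) := by
  have hNr : (1 : ℝ) ≤ N := by exact_mod_cast hN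
  have hN0 : (0 : ℝ) < N := by linarith
  set lam : ℝ := Y / N ^ 3 with hlam
  have hlam0 : 0 < lam := by positivity
  set q : ℝ := Real.sqrt lam with hq
  have hq0 : 0 < q := Real.sqrt_pos.2 hlam0
  have hqq : q * q = lam := Real.mul_self_sqrt hlam0.le
  have e1 : Real.sqrt (Y / N) = N * q := by
    rw [show Y / (N : ℝ) = (N : ℝ) ^ 2 * lam by rw [hlam]; field_simp,
      Real.sqrt_mul (by positivity), Real.sqrt_sq hN0.le]
  have e2 : Real.sqrt (N ^ 3 / Y) = 1 / q := by
    rw [show (N : ℝ) ^ 3 / Y = lam⁻¹ by rw [hlam, inv_div], Real.sqrt_inv, one_div]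
  rw [e1, e2]
  rcases le_or_gt lam 1 with hl | hl
  · have hq1 : q ≤ 1 := by nlinarith
    have hstep : ∀ k : ℕ, a ≤ k → k + 1 < b →
        lam / 12 ≤ (Y / (((k + 1 + 1 : ℕ) : ℝ) + θ) - Y / (((k + 1 : ℕ) : ℝ) + θ))
          - (Y / (((k + 1 : ℕ) : ℝ) + θ) - Y / ((k : ℝ) + θ)) := by
      intro k hk hkb
      have hk1 : (N : ℝ) ≤ k := by exact_mod_cast ha.trans hk
      have hk0 : 0 < (k : ℝ) + θ := by linarith
      have hk2 : (k : ℝ) + 2 ≤ 2 * N := by exact_mod_cast (by omega : k + 2 ≤ 2 * N)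
      have e : (Y / (((k + 1 + 1 : ℕ) : ℝ) + θ) - Y / (((k + 1 : ℕ) : ℝ) + θ))
          - (Y / (((k + 1 : ℕ) : ℝ) + θ) - Y / ((k : ℝ) + θ))
          = 2 * Y / (((k : ℝ) + θ) * ((k : ℝ) + 1 + θ) * ((k : ℝ) + 2 + θ)) := by
        push_cast
        field_simp
        ring
      rw [e, hlam, div_div, div_le_div_iff₀ (by positivity) (by positivity)]
      have h1 : ((k : ℝ) + θ) * ((k : ℝ) + 1 + θ) * ((k : ℝ) + 2 + θ)
          ≤ (2 * N) * (2 * N) * (3 * N) := by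
        gcongr <;> linarith
      have h2 : 0 ≤ Y * (N : ℝ) ^ 3 := by positivity
      nlinarith [mul_le_mul_of_nonneg_left h1 hY.le]
    have hlow : ∀ i j : ℕ, a ≤ i → i ≤ j → j < b → lam / 12 * ((j : ℝ) - i) ≤
        (Y / (((j + 1 : ℕ) : ℝ) + θ) - Y / ((j : ℝ) + θ))
          - (Y / (((i + 1 : ℕ) : ℝ) + θ) - Y / ((i : ℝ) + θ)) := by
      intro i j hi hij
      induction j, hij using Nat.le_induction with
      | base => intro _; simp
      | succ j hij ih =>
        intro hj
        have h1 := ih (by omega)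
        have h2 := hstep j (by omega) hj
        push_cast at h1 h2 ⊢
        linarith
    have hV : ∀ i j : ℕ, a ≤ i → i ≤ j → j < b →
        (Y / (((j + 1 : ℕ) : ℝ) + θ) - Y / ((j : ℝ) + θ))
          - (Y / (((i + 1 : ℕ) : ℝ) + θ) - Y / ((i : ℝ) + θ)) ≤ N * lam := by
      intro i j hi hij hj
      rw [first_difference_div hθ0 (by omega), first_difference_div hθ0 (by omega)]
      have hi1 : (N : ℝ) ≤ i := by exact_mod_cast ha.trans hi
      have h1 : 0 ≤ Y / (((j : ℝ) + θ) * ((j : ℝ) + 1 + θ)) := by positivity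
      have h2 : Y / (((i : ℝ) + θ) * ((i : ℝ) + 1 + θ)) ≤ Y / (N * N) := by
        gcongr <;> linarith
      have h3 : (N : ℝ) * lam = Y / (N * N) := by rw [hlam]; field_simp
      linarith
    have key := norm_sum_unitExp_le_of_second_differences (fun k => Y / ((k : ℝ) + θ)) a b
      (μ := lam / 12) (V := N * lam) (δ := q / 2) (by positivity) (by positivity) (by positivity)
      hlow hV
    refine key.trans ?_
    have h1 : 1 / (q / 2) + 2 * (q / 2 / (lam / 12) + 1) ≤ 16 / q := by
      rw [← hqq]
      have : 1 / (q / 2) + 2 * (q / 2 / (q * q / 12) + 1) = 14 / q + 2 := by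
        field_simp
        ring
      rw [this]
      have : 2 ≤ 2 / q := by rw [le_div_iff₀ hq0]; linarith
      have e : 16 / q = 14 / q + 2 / q := by ring
      linarith
    calc _ ≤ (N * lam + 2) * (16 / q) := mul_le_mul_of_nonneg_left h1 (by positivity)
      _ = _ := by rw [← hqq]; field_simp; ring
  · have hq1 : 1 ≤ q := by
      rw [hq]
      exact Real.one_le_sqrt.2 hl.le
    have h1 := norm_sum_unitExp_le_card (Ico a b) (fun k => Y / ((k : ℝ) + θ))
    have h2 : ((Ico a b).card : ℝ) ≤ N := by
      rw [Nat.card_Ico]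
      exact_mod_cast (by omega : b - a ≤ N)
    have h3 : (N : ℝ) ≤ N * q := by nlinarith
    have h4 : 0 ≤ 32 * (1 / q) := by positivity
    linarith [mul_nonneg hN0.le hq0.le]

/-- The sawtooth function `ψ(t) = {t} - 1/2`. -/
noncomputable def sawtooth (t : ℝ) : ℝ := Int.fract t - 1 / 2

/-- The periodic second Bernoulli function `B₂({t})`. -/
noncomputable def periodicBernoulliTwo (t : ℝ) : ℝ := Int.fract t ^ 2 - Int.fract t + 1 / 6

lemma abs_sawtooth_le (t : ℝ) : |sawtooth t| ≤ 1 / 2 := by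
  have h1 := Int.fract_nonneg t
  have h2 := Int.fract_lt_one t
  rw [sawtooth, abs_le]
  constructor <;> linarith

lemma hasSum_cos_periodicBernoulliTwo (t : ℝ) :
    HasSum (fun h : ℕ => 1 / (h : ℝ) ^ 2 * Real.cos (2 * Real.pi * h * t))
      (Real.pi ^ 2 * periodicBernoulliTwo t) := by
  have h := hasSum_one_div_nat_pow_mul_cos one_ne_zero
    (x := Int.fract t) ⟨Int.fract_nonneg t, (Int.fract_lt_one t).le⟩
  convert h using 1
  · funext n
    have : 2 * Real.pi * n * t
        = 2 * Real.pi * n * Int.fract t + ((n * ⌊t⌋ : ℤ) : ℝ) * (2 * Real.pi) := by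
      have := Int.self_sub_floor t
      push_cast
      rw [← this]
      ring
    rw [this, Real.cos_add_int_mul_two_pi, mul_one]
  · have : ∀ x : ℝ, (Polynomial.map (algebraMap ℚ ℝ) (Polynomial.bernoulli 2)).eval x
        = x ^ 2 - x + 1 / 6 := by
      intro x
      simp [Polynomial.bernoulli, sum_range_succ, Polynomial.eval_add, bernoulli_one,
        bernoulli_two]
      ring
    rw [mul_one, this, periodicBernoulliTwo]
    have : ((Nat.factorial 2 : ℕ) : ℝ) = 2 := by norm_num [Nat.factorial]
    rw [this]
    ring

lemma fract_add_cases {t δ : ℝ} (h0 : 0 ≤ δ) (h1 : δ ≤ 1) :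
    (Int.fract (t + δ) = Int.fract t + δ) ∨
      (Int.fract (t + δ) = Int.fract t + δ - 1 ∧ 1 ≤ Int.fract t + δ) := by
  have a0 := Int.fract_nonneg t
  have a1 := Int.fract_lt_one t
  rcases lt_or_ge (Int.fract t + δ) 1 with h | h
  · left
    rw [Int.fract_eq_iff]
    exact ⟨by linarith, h, ⌊t⌋, by rw [← Int.self_sub_floor t]; ring⟩
  · right
    refine ⟨?_, h⟩
    rw [Int.fract_eq_iff]
    exact ⟨by linarith, by linarith, ⌊t⌋ + 1, by push_cast; rw [← Int.self_sub_floor t]; ring⟩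

lemma le_sawtooth_of_shift {t δ : ℝ} (h0 : 0 ≤ δ) (h1 : δ ≤ 1) :
    periodicBernoulliTwo (t + δ) - periodicBernoulliTwo t ≤ 2 * δ * sawtooth t + δ ^ 2 := by
  have a1 := Int.fract_lt_one t
  rw [periodicBernoulliTwo, periodicBernoulliTwo, sawtooth]
  rcases fract_add_cases (t := t) h0 h1 with h | ⟨h, h'⟩ <;> rw [h] <;> nlinarith

lemma sawtooth_le_of_shift {t δ : ℝ} (h0 : 0 ≤ δ) (h1 : δ ≤ 1) :
    2 * δ * sawtooth t ≤ periodicBernoulliTwo t - periodicBernoulliTwo (t + -δ) + δ ^ 2 := by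
  have a1 := Int.fract_lt_one (t + -δ)
  have e : t + -δ + δ = t := by ring
  have h := fract_add_cases (t := t + -δ) h0 h1
  rw [e] at h
  rw [periodicBernoulliTwo, periodicBernoulliTwo, sawtooth]
  rcases h with h | ⟨h, h'⟩ <;> rw [h] <;> nlinarith

lemma sum_min_inv_sqrt_le {δ : ℝ} (hδ : 0 < δ) (H : ℕ) :
    ∑ h ∈ range H, min (1 / Real.sqrt h) (1 / (δ * (h * Real.sqrt h))) ≤ 8 / Real.sqrt δ := by
  set w := Real.sqrt δ with hw
  have hw0 : 0 < w := Real.sqrt_pos.2 hδ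
  have hww : w * w = δ := Real.mul_self_sqrt hδ.le
  have main : ∀ n : ℕ, ∑ h ∈ range (n + 1), min (1 / Real.sqrt h) (1 / (δ * (h * Real.sqrt h)))
      ≤ 8 * (Real.sqrt n / (1 + w * Real.sqrt n)) := by
    intro n
    induction n with
    | zero => simp
    | succ n ih =>
      rw [sum_range_succ]
      set r := Real.sqrt (n : ℝ) with hr
      set s := Real.sqrt ((n + 1 : ℕ) : ℝ) with hs
      have hr0 : 0 ≤ r := Real.sqrt_nonneg _
      have hs0 : 0 < s := Real.sqrt_pos.2 (by positivity)
      have hrr : r * r = n := Real.mul_self_sqrt (by positivity)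
      have hss : s * s = n + 1 := by
        have := Real.mul_self_sqrt (show (0 : ℝ) ≤ ((n + 1 : ℕ) : ℝ) by positivity)
        rw [← hs] at this
        push_cast at this
        exact this
      have hrs : r ≤ s := Real.sqrt_le_sqrt (by push_cast; linarith)
      have hdiff : (s - r) * (s + r) = 1 := by linarith
      have h1 : 1 / (2 * s * (1 + w * s) ^ 2) ≤ s / (1 + w * s) - r / (1 + w * r) := by
        have e : s / (1 + w * s) - r / (1 + w * r) = 1 / ((s + r) * (1 + w * s) * (1 + w * r)) := by
          have h3 : 0 < s + r := by linarith
          field_simp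
          linear_combination hdiff
        rw [e]
        apply one_div_le_one_div_of_le (by positivity)
        have : (s + r) * (1 + w * s) * (1 + w * r) ≤ (2 * s) * (1 + w * s) * (1 + w * s) := by
          gcongr
          linarith
        linarith
      have h2 : min (1 / s) (1 / (δ * (((n + 1 : ℕ) : ℝ) * s))) ≤ 8 * (1 / (2 * s * (1 + w * s) ^ 2)) := by
        have e8 : 8 * (1 / (2 * s * (1 + w * s) ^ 2)) = 4 / (s * (1 + w * s) ^ 2) := by
          field_simp
          norm_num
        rw [e8]
        rcases le_total (w * s) 1 with h | h
        · refine (min_le_left _ _).trans ?_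
          rw [div_le_div_iff₀ hs0 (by positivity)]
          have : (1 + w * s) ^ 2 ≤ 4 := by nlinarith [mul_pos hw0 hs0]
          nlinarith
        · refine (min_le_right _ _).trans ?_
          push_cast
          rw [← hww, ← hss, div_le_div_iff₀ (by positivity) (by positivity)]
          have : (1 + w * s) ^ 2 ≤ 4 * (w * s) ^ 2 := by nlinarith
          nlinarith [mul_le_mul_of_nonneg_left this hs0.le]
      linarith
  rcases H with _ | n
  · simp
    positivity
  · refine (main n).trans ?_
    rw [mul_div_assoc', div_le_div_iff₀ (by positivity) hw0]
    nlinarith [Real.sqrt_nonneg (n : ℝ)]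

lemma unitExp_re_shift_sum (S : Finset ℕ) (t : ℕ → ℝ) (δ : ℝ) (h : ℕ) :
    ∑ k ∈ S, (Real.cos (2 * Real.pi * h * (t k + δ)) - Real.cos (2 * Real.pi * h * t k))
      = ((∑ k ∈ S, unitExp (h * t k)) * (unitExp (h * δ) - 1)).re := by
  rw [sum_mul, Complex.re_sum]
  refine sum_congr rfl fun k _ => ?_
  rw [mul_sub, ← unitExp_add, mul_one, Complex.sub_re, unitExp_re, unitExp_re]
  congr 2 <;> ring

lemma abs_sum_periodicBernoulliTwo_shift_le (S : Finset ℕ) (t : ℕ → ℝ) {δ A A' : ℝ} (hδ : δ ≠ 0)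
    (hA : 0 ≤ A) (hA' : 0 ≤ A')
    (hE : ∀ h : ℕ, 1 ≤ h →
      ‖∑ k ∈ S, unitExp (h * t k)‖ ≤ A * Real.sqrt h + A' / Real.sqrt h) :
    |∑ k ∈ S, (periodicBernoulliTwo (t k + δ) - periodicBernoulliTwo (t k))|
      ≤ 2 * |δ| * (8 * A / Real.sqrt |δ| + 8 * A') := by
  have hd : 0 < |δ| := abs_pos.2 hδ
  have hπ := Real.pi_pos
  have hπ3 : 1 ≤ Real.pi := by linarith [Real.pi_gt_three]
  set c : ℕ → ℝ := fun h => 1 / (h : ℝ) ^ 2 *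
    ((∑ k ∈ S, unitExp (h * t k)) * (unitExp (h * δ) - 1)).re with hc
  have hsum : HasSum c
      (Real.pi ^ 2 * ∑ k ∈ S, (periodicBernoulliTwo (t k + δ) - periodicBernoulliTwo (t k))) := by
    have h1 := hasSum_sum (s := S) fun k _ => (hasSum_cos_periodicBernoulliTwo (t k + δ)).sub
      (hasSum_cos_periodicBernoulliTwo (t k))
    have e1 : c = fun h : ℕ => ∑ k ∈ S, (1 / (h : ℝ) ^ 2 * Real.cos (2 * Real.pi * h * (t k + δ))
        - 1 / (h : ℝ) ^ 2 * Real.cos (2 * Real.pi * h * t k)) := by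
      funext h
      simp only [hc]
      rw [← unitExp_re_shift_sum, mul_sum]
      exact sum_congr rfl fun k _ => by ring
    simp only [← mul_sub, ← mul_sum] at h1 e1
    rw [e1]
    exact h1
  have hterm : ∀ h : ℕ, |c h| ≤ 2 * Real.pi ^ 2 * |δ| *
      (A * min (1 / Real.sqrt h) (1 / (|δ| * (h * Real.sqrt h)))
        + A' * min (1 / Real.sqrt h) (1 / (1 * (h * Real.sqrt h)))) := by
    intro h
    rcases Nat.eq_zero_or_pos h with rfl | hpos
    · simp [hc]
    have hh1 : (1 : ℝ) ≤ h := by exact_mod_cast hpos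
    have hh0 : (0 : ℝ) < h := by linarith
    set s := Real.sqrt (h : ℝ) with hs
    have hs0 : 0 < s := Real.sqrt_pos.2 hh0
    have hss : s * s = h := Real.mul_self_sqrt hh0.le
    have hn1 : ‖unitExp (h * δ) - 1‖ ≤ 2 := by
      refine (norm_sub_le _ _).trans ?_
      rw [norm_unitExp, norm_one]
      norm_num
    have hn2 : ‖unitExp (h * δ) - 1‖ ≤ 2 * Real.pi * (h * |δ|) := by
      have := norm_unitExp_sub_one_le (h * δ)
      rwa [abs_mul, abs_of_pos hh0] at this
    have h0 : |c h| ≤ 1 / (h : ℝ) ^ 2 * ((A * s + A' / s) * ‖unitExp (h * δ) - 1‖) := by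
      simp only [hc]
      rw [abs_mul, abs_of_pos (by positivity : 0 < 1 / (h : ℝ) ^ 2)]
      refine mul_le_mul_of_nonneg_left ?_ (by positivity)
      refine (Complex.abs_re_le_norm _).trans ?_
      rw [norm_mul]
      exact mul_le_mul_of_nonneg_right (hE h hpos) (norm_nonneg _)
    refine h0.trans ?_
    set R := ‖unitExp (h * δ) - 1‖ with hR
    have p1 : 1 / (h : ℝ) ^ 2 * (s * R) ≤
        2 * Real.pi ^ 2 * |δ| * min (1 / s) (1 / (|δ| * (h * s))) := by
      rw [mul_min_of_nonneg _ _ (by positivity), ← hss]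
      rw [← hss] at hn2
      refine le_min ?_ ?_
      · calc 1 / (s * s) ^ 2 * (s * R) ≤ 1 / (s * s) ^ 2 * (s * (2 * Real.pi * (s * s * |δ|))) := by
              gcongr
          _ = 2 * Real.pi * |δ| * (1 / s) := by field_simp
          _ ≤ 2 * Real.pi ^ 2 * |δ| * (1 / s) := by gcongr; nlinarith
      · calc 1 / (s * s) ^ 2 * (s * R) ≤ 1 / (s * s) ^ 2 * (s * 2) := by gcongr
          _ = 2 * 1 * |δ| * (1 / (|δ| * (s * s * s))) := by field_simp
          _ ≤ 2 * Real.pi ^ 2 * |δ| * (1 / (|δ| * (s * s * s))) := by gcongr; nlinarith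
    have hs1 : 1 ≤ s := Real.one_le_sqrt.2 hh1
    have p2 : 1 / (h : ℝ) ^ 2 * (1 / s * R) ≤
        2 * Real.pi ^ 2 * |δ| * min (1 / s) (1 / (1 * (h * s))) := by
      have hmin : 1 / (1 * ((h : ℝ) * s)) ≤ 1 / s := by
        apply one_div_le_one_div_of_le hs0
        nlinarith
      rw [min_eq_right hmin, ← hss]
      rw [← hss] at hn2
      calc 1 / (s * s) ^ 2 * (1 / s * R)
          ≤ 1 / (s * s) ^ 2 * (1 / s * (2 * Real.pi * (s * s * |δ|))) := by gcongr
        _ = 2 * Real.pi * |δ| * (1 / (1 * (s * s * s))) := by field_simp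
        _ ≤ 2 * Real.pi ^ 2 * |δ| * (1 / (1 * (s * s * s))) := by gcongr; nlinarith
    have e : 1 / (h : ℝ) ^ 2 * ((A * s + A' / s) * R)
        = A * (1 / (h : ℝ) ^ 2 * (s * R)) + A' * (1 / (h : ℝ) ^ 2 * (1 / s * R)) := by ring
    rw [e]
    have q1 := mul_le_mul_of_nonneg_left p1 hA
    have q2 := mul_le_mul_of_nonneg_left p2 hA'
    linarith
  have hpart : ∀ H : ℕ, |∑ h ∈ range H, c h| ≤
      2 * Real.pi ^ 2 * |δ| * (8 * A / Real.sqrt |δ| + 8 * A') := by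
    intro H
    refine (abs_sum_le_sum_abs _ _).trans ((sum_le_sum fun h _ => hterm h).trans ?_)
    rw [← mul_sum, sum_add_distrib, ← mul_sum, ← mul_sum]
    have h1 := mul_le_mul_of_nonneg_left (sum_min_inv_sqrt_le hd H) hA
    have h2 := mul_le_mul_of_nonneg_left (sum_min_inv_sqrt_le one_pos H) hA'
    rw [Real.sqrt_one] at h2
    refine mul_le_mul_of_nonneg_left ?_ (by positivity)
    have e : 8 * A / Real.sqrt |δ| = A * (8 / Real.sqrt |δ|) := by ring
    rw [e]
    linarith
  have hlim := le_of_tendsto hsum.tendsto_sum_nat.abs (Eventually.of_forall hpart)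
  rw [abs_mul, abs_of_pos (by positivity : 0 < Real.pi ^ 2)] at hlim
  have : 0 < Real.pi ^ 2 := by positivity
  nlinarith

/-- A sum of sawtooth values is small if the corresponding exponential sums are. -/
lemma abs_sum_sawtooth_le (S : Finset ℕ) (t : ℕ → ℝ) {δ A A' : ℝ} (hδ : 0 < δ) (hδ1 : δ ≤ 1)
    (hA : 0 ≤ A) (hA' : 0 ≤ A')
    (hE : ∀ h : ℕ, 1 ≤ h →
      ‖∑ k ∈ S, unitExp (h * t k)‖ ≤ A * Real.sqrt h + A' / Real.sqrt h) :
    |∑ k ∈ S, sawtooth (t k)| ≤ S.card * δ / 2 + 8 * A / Real.sqrt δ + 8 * A' := by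
  have b1 := abs_sum_periodicBernoulliTwo_shift_le S t hδ.ne' hA hA' hE
  have b2 := abs_sum_periodicBernoulliTwo_shift_le S t (neg_ne_zero.2 hδ.ne') hA hA' hE
  rw [abs_neg] at b2
  rw [abs_of_pos hδ] at b1 b2
  have l1 := sum_le_sum fun k (_ : k ∈ S) => le_sawtooth_of_shift (t := t k) hδ.le hδ1
  have l2 := sum_le_sum fun k (_ : k ∈ S) => sawtooth_le_of_shift (t := t k) hδ.le hδ1
  rw [sum_add_distrib, ← mul_sum, sum_const, nsmul_eq_mul] at l1
  rw [sum_add_distrib, ← mul_sum, sum_const, nsmul_eq_mul] at l2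
  have e : ∑ k ∈ S, (periodicBernoulliTwo (t k) - periodicBernoulliTwo (t k + -δ))
      = -∑ k ∈ S, (periodicBernoulliTwo (t k + -δ) - periodicBernoulliTwo (t k)) := by
    rw [← sum_neg_distrib]
    exact sum_congr rfl fun k _ => by ring
  rw [e] at l2
  have b1' := (abs_le.1 b1).1
  have b2' := (abs_le.1 b2).1
  generalize 8 * A / Real.sqrt δ = P at *
  rw [abs_le]
  constructor
  · refine le_of_mul_le_mul_left ?_ (by positivity : 0 < 2 * δ)
    nlinarith
  · refine le_of_mul_le_mul_left ?_ (by positivity : 0 < 2 * δ)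
    nlinarith

lemma rpow_third_pow {y : ℝ} (hy : 0 ≤ y) : (y ^ ((1 : ℝ) / 3)) ^ 3 = y := by
  rw [← Real.rpow_natCast, ← Real.rpow_mul hy]
  norm_num

/-- A sawtooth sum along `y / (k + θ) + c` over part of a dyadic block. -/
lemma abs_sum_sawtooth_div_block_le {y θ : ℝ} (c : ℝ) (hy : 0 < y) (hθ0 : 0 ≤ θ) (hθ1 : θ ≤ 1)
    {N a b : ℕ} (hN : 1 ≤ N) (ha : N ≤ a) (hb : b ≤ 2 * N) :
    |∑ k ∈ Ico a b, sawtooth (y / (k + θ) + c)|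
      ≤ 129 * y ^ ((1 : ℝ) / 3) + 256 * Real.sqrt (N ^ 3 / y) := by
  have hNr : (1 : ℝ) ≤ N := by exact_mod_cast hN
  have hN0 : (0 : ℝ) < N := by linarith
  set s := y ^ ((1 : ℝ) / 3) with hs
  have hs0 : 0 < s := Real.rpow_pos_of_pos hy _
  have hs3 : s ^ 3 = y := rpow_third_pow hy.le
  have hcard : ((Ico a b).card : ℝ) ≤ N := by
    rw [Nat.card_Ico]
    exact_mod_cast (by omega : b - a ≤ N)
  have hsq := Real.sqrt_nonneg ((N : ℝ) ^ 3 / y)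
  rcases le_or_gt s N with h | h
  · have hE : ∀ h : ℕ, 1 ≤ h → ‖∑ k ∈ Ico a b, unitExp (h * (y / ((k : ℝ) + θ) + c))‖ ≤
        16 * Real.sqrt (y / N) * Real.sqrt h + 32 * Real.sqrt (N ^ 3 / y) / Real.sqrt h := by
      intro h hh
      have hh0 : (0 : ℝ) < h := by exact_mod_cast hh
      have e : ∑ k ∈ Ico a b, unitExp (h * (y / ((k : ℝ) + θ) + c))
          = (∑ k ∈ Ico a b, unitExp (h * y / ((k : ℝ) + θ))) * unitExp (h * c) := by
        rw [sum_mul]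
        refine sum_congr rfl fun k _ => ?_
        rw [← unitExp_add]
        congr 1
        ring
      rw [e, norm_mul, norm_unitExp, mul_one]
      refine (norm_sum_unitExp_div_le (mul_pos hh0 hy) hθ0 hθ1 hN ha hb).trans (le_of_eq ?_)
      rw [show h * y / (N : ℝ) = (y / N) * h by ring, Real.sqrt_mul (by positivity),
        show (N : ℝ) ^ 3 / (h * y) = (N ^ 3 / y) / h by field_simp,
        Real.sqrt_div (x := (N : ℝ) ^ 3 / y) (by positivity)]
      ring
    have key := abs_sum_sawtooth_le (Ico a b) (fun k => y / ((k : ℝ) + θ) + c) (δ := s / N)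
      (by positivity) ((div_le_one hN0).2 h) (by positivity) (by positivity) hE
    refine key.trans ?_
    have e1 : 8 * (16 * Real.sqrt (y / N)) / Real.sqrt (s / N) = 128 * s := by
      have : Real.sqrt (y / N) = s * Real.sqrt (s / N) := by
        rw [← hs3, show s ^ 3 / N = s ^ 2 * (s / N) by ring, Real.sqrt_mul (by positivity),
          Real.sqrt_sq hs0.le]
      rw [this]
      have : 0 < Real.sqrt (s / N) := Real.sqrt_pos.2 (by positivity)
      field_simp
      norm_num
    have e2 : ((Ico a b).card : ℝ) * (s / N) / 2 ≤ s := by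
      have : ((Ico a b).card : ℝ) * (s / N) ≤ N * (s / N) := by gcongr
      rw [mul_div_cancel₀ s hN0.ne'] at this
      linarith
    rw [e1]
    linarith
  · have h1 : |∑ k ∈ Ico a b, sawtooth (y / (k + θ) + c)| ≤ (Ico a b).card * (1 / 2) := by
      refine (abs_sum_le_sum_abs _ _).trans ?_
      refine (sum_le_sum fun k _ => abs_sawtooth_le _).trans ?_
      rw [sum_const, nsmul_eq_mul]
    linarith

lemma abs_sum_sawtooth_div_dyadic_le {y θ : ℝ} (c : ℝ) (hy : 0 < y) (hθ0 : 0 ≤ θ) (hθ1 : θ ≤ 1)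
    (K j b : ℕ) (hb : b ≤ K + 1) (hj : b ≤ 2 ^ j) :
    |∑ k ∈ Ico 1 b, sawtooth (y / (k + θ) + c)|
      ≤ j * (129 * y ^ ((1 : ℝ) / 3) + 256 * Real.sqrt (K ^ 3 / y)) := by
  have hW : 0 ≤ 129 * y ^ ((1 : ℝ) / 3) + 256 * Real.sqrt (K ^ 3 / y) := by positivity
  induction j generalizing b with
  | zero =>
    rw [Ico_eq_empty_of_le (by simpa using hj)]
    simp
  | succ j ih =>
    rcases le_or_gt b (2 ^ j) with h | h
    · refine (ih b hb h).trans ?_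
      push_cast
      linarith
    · have h1 : 1 ≤ 2 ^ j := Nat.one_le_two_pow
      rw [← sum_Ico_consecutive _ h1 h.le]
      refine (abs_add_le _ _).trans ?_
      have i1 := ih (2 ^ j) (by omega) le_rfl
      have i2 := abs_sum_sawtooth_div_block_le c hy hθ0 hθ1 h1 le_rfl
        (b := b) (by rw [pow_succ] at hj; omega)
      have i3 : Real.sqrt (((2 ^ j : ℕ) : ℝ) ^ 3 / y) ≤ Real.sqrt ((K : ℝ) ^ 3 / y) := by
        have : ((2 ^ j : ℕ) : ℝ) ≤ K := by exact_mod_cast (by omega : 2 ^ j ≤ K)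
        gcongr
      push_cast at *
      linarith

/-- Van der Corput's bound for sawtooth sums along a hyperbola. -/
lemma abs_sum_sawtooth_div_le {x y θ : ℝ} (c : ℝ) (hy : 0 < y) (hθ0 : 0 ≤ θ) (hθ1 : θ ≤ 1)
    (hx : 2 ≤ x) {K : ℕ} (hK : (K : ℝ) ≤ x) :
    |∑ k ∈ Icc 1 K, sawtooth (y / (k + θ) + c)|
      ≤ 768 * Real.log x * (y ^ ((1 : ℝ) / 3) + Real.sqrt (K ^ 3 / y)) := by
  have hlt : K < 2 ^ (Nat.log 2 K + 1) := Nat.lt_pow_succ_log_self one_lt_two K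
  have h := abs_sum_sawtooth_div_dyadic_le c hy hθ0 hθ1 K (Nat.log 2 K + 1) (K + 1) le_rfl hlt
  rw [Ico_add_one_right_eq_Icc] at h
  refine h.trans ?_
  have hl2 : 0.6931471803 < Real.log 2 := Real.log_two_gt_d9
  have hlx : Real.log 2 ≤ Real.log x := Real.log_le_log two_pos hx
  have hlog : ((Nat.log 2 K + 1 : ℕ) : ℝ) ≤ 3 * Real.log x := by
    have h1 : (Nat.log 2 K : ℝ) * Real.log 2 ≤ Real.log x := by
      rcases Nat.eq_zero_or_pos K with rfl | hpos
      · simp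
        linarith
      · have h2 : ((2 ^ Nat.log 2 K : ℕ) : ℝ) ≤ K := by
          exact_mod_cast Nat.pow_log_le_self 2 hpos.ne'
        rw [← Real.log_pow]
        refine Real.log_le_log (by positivity) ?_
        push_cast at h2
        linarith
    push_cast
    have : (0 : ℝ) ≤ Nat.log 2 K := by positivity
    nlinarith
  calc _ ≤ (3 * Real.log x) * (129 * y ^ ((1 : ℝ) / 3) + 256 * Real.sqrt (K ^ 3 / y)) := by
        gcongr
    _ ≤ (3 * Real.log x) * (256 * (y ^ ((1 : ℝ) / 3) + Real.sqrt (K ^ 3 / y))) := by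
        have : 0 ≤ y ^ ((1 : ℝ) / 3) := by positivity
        gcongr
        · linarith
        · linarith
    _ = _ := by ring

/-- The ratio `β(m)/m`. -/
noncomputable def altSigmaRatio (m : ℕ) : ℝ := altSigma m / m

/-- The function `λ(d)/d`, where `λ` is the Liouville function. -/
noncomputable def liouvilleDiv (d : ℕ) : ℝ := (-1 : ℝ) ^ ArithmeticFunction.cardFactors d / d

/-- The constant `∑ λ(d)/d²`, the mean value of `β(m)/m`. -/
noncomputable def altSigmaMean : ℝ := ∑' d : ℕ, liouvilleDiv d / d

lemma abs_liouvilleDiv (d : ℕ) : |liouvilleDiv d| = 1 / d := by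
  rw [liouvilleDiv, abs_div, abs_pow, abs_neg, abs_one, one_pow, Nat.abs_cast]

lemma altSigmaRatio_eq_sum_divisors (m : ℕ) :
    altSigmaRatio m = ∑ d ∈ m.divisors, liouvilleDiv d := by
  rw [altSigmaRatio, altSigma, sum_div, ← Nat.sum_div_divisors]
  refine sum_congr rfl fun d hd => ?_
  obtain ⟨hdm, hm⟩ := Nat.mem_divisors.1 hd
  have hd0 : (d : ℝ) ≠ 0 := by
    exact_mod_cast (Nat.pos_of_dvd_of_pos hdm (Nat.pos_of_ne_zero hm)).ne'
  have hm0 : (m : ℝ) ≠ 0 := by exact_mod_cast hm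
  rw [liouvilleDiv, Nat.cast_div hdm hd0, Nat.div_div_self hdm hm]
  field_simp

lemma altSigmaRatio_zero : altSigmaRatio 0 = 0 := by
  simp [altSigmaRatio]

lemma divisors_eq_filter_Icc {m M : ℕ} (hm : 1 ≤ m) (hM : m ≤ M) :
    m.divisors = {d ∈ Icc 1 M | d ∣ m} := by
  ext d
  rw [Nat.mem_divisors, mem_filter, mem_Icc]
  constructor
  · rintro ⟨h, _⟩
    exact ⟨⟨Nat.pos_of_dvd_of_pos h hm, (Nat.le_of_dvd hm h).trans hM⟩, h⟩
  · rintro ⟨_, h⟩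
    exact ⟨h, by omega⟩

lemma altSigmaRatio_eq_sum_ite {m M : ℕ} (hm : 1 ≤ m) (hM : m ≤ M) :
    altSigmaRatio m = ∑ d ∈ Icc 1 M, if d ∣ m then liouvilleDiv d else 0 := by
  rw [altSigmaRatio_eq_sum_divisors, divisors_eq_filter_Icc hm hM, sum_filter]

lemma sum_multiples (q : ℕ → ℝ) (M : ℕ) {d : ℕ} (hd : 1 ≤ d) :
    ∑ m ∈ Icc 1 M with d ∣ m, q m = ∑ k ∈ Icc 1 (M / d), q (d * k) := by
  refine (sum_nbij' (fun k => d * k) (fun m => m / d) ?_ ?_ ?_ ?_ ?_).symm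
  · intro k hk
    rw [mem_Icc] at hk
    rw [mem_filter, mem_Icc]
    refine ⟨⟨Nat.mul_pos hd hk.1, ?_⟩, dvd_mul_right _ _⟩
    rw [mul_comm]
    exact (Nat.le_div_iff_mul_le hd).1 hk.2
  · intro m hm
    rw [mem_filter, mem_Icc] at hm
    rw [mem_Icc]
    exact ⟨Nat.div_pos (Nat.le_of_dvd hm.1.1 hm.2) hd, Nat.div_le_div_right hm.1.2⟩
  · intro k _
    exact Nat.mul_div_cancel_left k hd
  · intro m hm
    exact Nat.mul_div_cancel' (mem_filter.1 hm).2
  · intro k _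
    rfl

lemma sum_altSigmaRatio_mul (q : ℕ → ℝ) (M : ℕ) :
    ∑ m ∈ Icc 1 M, altSigmaRatio m * q m
      = ∑ d ∈ Icc 1 M, liouvilleDiv d * ∑ k ∈ Icc 1 (M / d), q (d * k) := by
  have h1 : ∀ m ∈ Icc 1 M, altSigmaRatio m * q m
      = ∑ d ∈ Icc 1 M, if d ∣ m then liouvilleDiv d * q m else 0 := fun m hm => by
    rw [mem_Icc] at hm
    rw [altSigmaRatio_eq_sum_ite hm.1 hm.2, sum_mul]
    exact sum_congr rfl fun d _ => by rw [ite_mul, zero_mul]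
  rw [sum_congr rfl h1, sum_comm]
  refine sum_congr rfl fun d hd => ?_
  rw [← sum_multiples q M (mem_Icc.1 hd).1, mul_sum, sum_filter]

lemma sum_one_div_le_one_add_log (n : ℕ) : ∑ d ∈ Icc 1 n, 1 / (d : ℝ) ≤ 1 + Real.log n := by
  have h := harmonic_le_one_add_log n
  rw [harmonic_eq_sum_Icc] at h
  push_cast at h
  simpa only [one_div] using h

lemma two_add_log_le_two_mul_sqrt {m : ℕ} (hm : 1 ≤ m) :
    2 + Real.log m ≤ 2 * Real.sqrt m := by
  have h0 : (0 : ℝ) < m := by exact_mod_cast hm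
  have h := Real.log_le_sub_one_of_pos (Real.sqrt_pos.2 h0)
  rw [Real.log_sqrt h0.le] at h
  linarith

lemma abs_altSigmaRatio_le {m : ℕ} (hm : 1 ≤ m) : |altSigmaRatio m| ≤ 2 * Real.sqrt m := by
  rw [altSigmaRatio_eq_sum_ite hm le_rfl]
  have h1 : ∀ d ∈ Icc 1 m, |if d ∣ m then liouvilleDiv d else 0| ≤ 1 / (d : ℝ) := fun d _ => by
    split_ifs
    · rw [abs_liouvilleDiv]
    · rw [abs_zero]
      positivity
  have h2 := (abs_sum_le_sum_abs _ _).trans (sum_le_sum h1)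
  linarith [sum_one_div_le_one_add_log m, two_add_log_le_two_mul_sqrt hm]

lemma summable_liouvilleDiv_div : Summable fun d : ℕ => liouvilleDiv d / d := by
  refine Summable.of_norm_bounded (g := fun d : ℕ => 1 / (d : ℝ) ^ 2)
    (Real.summable_one_div_nat_pow.2 one_lt_two) fun d => ?_
  rw [Real.norm_eq_abs, abs_div, abs_liouvilleDiv, Nat.abs_cast]
  exact le_of_eq (by ring)

lemma range_succ_eq_sum_Icc (f : ℕ → ℝ) (h0 : f 0 = 0) (n : ℕ) :
    ∑ i ∈ range (n + 1), f i = ∑ i ∈ Icc 1 n, f i := by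
  rw [range_eq_Ico, sum_eq_sum_Ico_succ_bot (Nat.succ_pos n), h0, zero_add]
  rfl

lemma sum_Icc_add_sum_Ioc (f : ℕ → ℝ) {D n : ℕ} (h : D ≤ n) :
    ∑ i ∈ Icc 1 D, f i + ∑ i ∈ Ioc D n, f i = ∑ i ∈ Icc 1 n, f i := by
  have e : ∀ k : ℕ, Icc 1 k = Ioc 0 k := fun k => rfl
  rw [e, e, sum_Ioc_consecutive _ (Nat.zero_le _) h]

lemma sum_Ioc_one_div_sq_le {D n : ℕ} (hD : 1 ≤ D) :
    ∑ d ∈ Ioc D n, 1 / (d : ℝ) ^ 2 ≤ 1 / (D : ℝ) := by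
  rcases le_total D n with h | h
  · have := sum_Ioc_inv_sq_le_sub (α := ℝ) (by omega : D ≠ 0) h
    have h2 : (0 : ℝ) ≤ (n : ℝ)⁻¹ := by positivity
    simp only [one_div]
    linarith
  · rw [Ioc_eq_empty_of_le h, sum_empty]
    positivity

lemma abs_altSigmaMean_sub_le {D : ℕ} (hD : 1 ≤ D) :
    |altSigmaMean - ∑ d ∈ Icc 1 D, liouvilleDiv d / d| ≤ 1 / D := by
  have hlim := ((summable_liouvilleDiv_div.hasSum.tendsto_sum_nat.comp
    (tendsto_add_atTop_nat 1)).sub_const (∑ d ∈ Icc 1 D, liouvilleDiv d / d)).abs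
  refine le_of_tendsto hlim ((eventually_ge_atTop D).mono fun n hn => ?_)
  simp only [Function.comp_apply]
  rw [range_succ_eq_sum_Icc _ (by simp), ← sum_Icc_add_sum_Ioc _ hn, add_sub_cancel_left]
  refine (abs_sum_le_sum_abs _ _).trans (le_trans (le_of_eq ?_) (sum_Ioc_one_div_sq_le (n := n) hD))
  refine sum_congr rfl fun d _ => ?_
  rw [abs_div, abs_liouvilleDiv, Nat.abs_cast]
  ring

/-- The summatory function of `β(m)/m` is linear up to a small error. -/
lemma abs_sum_altSigmaRatio_sub_le {m : ℕ} (hm : 1 ≤ m) :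
    |∑ i ∈ Icc 1 m, altSigmaRatio i - altSigmaMean * m| ≤ 2 * Real.sqrt m := by
  have hm0 : (0 : ℝ) < m := by exact_mod_cast hm
  have h1 := sum_altSigmaRatio_mul (fun _ => 1) m
  simp only [mul_one, sum_const, Nat.card_Icc, Nat.add_sub_cancel, nsmul_eq_mul] at h1
  have e : ∑ i ∈ Icc 1 m, altSigmaRatio i - altSigmaMean * m
      = -(∑ d ∈ Icc 1 m, liouvilleDiv d * ((m : ℝ) / d - (m / d : ℕ)))
        - m * (altSigmaMean - ∑ d ∈ Icc 1 m, liouvilleDiv d / d) := by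
    rw [h1, mul_sub, mul_sum, ← sum_neg_distrib, sub_sub_eq_add_sub, ← sum_add_distrib]
    rw [mul_comm altSigmaMean]
    congr 1
    exact sum_congr rfl fun d _ => by ring
  have hfr : ∀ d ∈ Icc 1 m, |liouvilleDiv d * ((m : ℝ) / d - (m / d : ℕ))| ≤ 1 / (d : ℝ) := by
    intro d hd
    rw [mem_Icc] at hd
    have hd0 : (0 : ℝ) < d := by exact_mod_cast hd.1
    have a1 : ((m / d : ℕ) : ℝ) ≤ (m : ℝ) / d := Nat.cast_div_le
    have a2 : (m : ℝ) / d ≤ (m / d : ℕ) + 1 := by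
      rw [div_le_iff₀ hd0]
      have := Nat.lt_div_mul_add (a := m) hd.1
      have h2 : m ≤ (m / d + 1) * d := by rw [add_mul]; omega
      exact_mod_cast h2
    rw [abs_mul, abs_liouvilleDiv]
    exact mul_le_of_le_one_right (by positivity) (abs_le.2 ⟨by linarith, by linarith⟩)
  have b1 := (abs_sum_le_sum_abs _ _).trans (sum_le_sum hfr)
  have b2 : |(m : ℝ) * (altSigmaMean - ∑ d ∈ Icc 1 m, liouvilleDiv d / d)| ≤ 1 := by
    rw [abs_mul, abs_of_pos hm0]
    have := mul_le_mul_of_nonneg_left (abs_altSigmaMean_sub_le hm) hm0.le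
    rwa [mul_one_div_cancel hm0.ne'] at this
  rw [e, sub_eq_add_neg]
  refine (abs_add_le _ _).trans ?_
  rw [abs_neg, abs_neg]
  linarith [sum_one_div_le_one_add_log m, two_add_log_le_two_mul_sqrt hm]

lemma summable_altSigmaRatio_div :
    Summable fun m : ℕ => altSigmaRatio m * (1 / ((m : ℝ) * (m + 1))) := by
  refine Summable.of_norm_bounded (g := fun m : ℕ => 2 * (1 / (m : ℝ) ^ ((3 : ℝ) / 2)))
    ((Real.summable_one_div_nat_rpow.2 (by norm_num)).mul_left 2) fun m => ?_
  rcases Nat.eq_zero_or_pos m with rfl | hm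
  · rw [altSigmaRatio_zero, zero_mul, norm_zero]
    positivity
  · have hm0 : (0 : ℝ) < m := by exact_mod_cast hm
    rw [norm_mul, Real.norm_eq_abs, Real.norm_eq_abs,
      abs_of_pos (by positivity : 0 < 1 / ((m : ℝ) * (m + 1)))]
    have hs0 : 0 < Real.sqrt m := Real.sqrt_pos.2 hm0
    have e : (m : ℝ) ^ ((3 : ℝ) / 2) = m * Real.sqrt m := by
      rw [show (3 : ℝ) / 2 = 1 + 1 / 2 by norm_num, Real.rpow_add hm0, Real.rpow_one,
        Real.sqrt_eq_rpow]
    calc |altSigmaRatio m| * (1 / ((m : ℝ) * (m + 1)))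
        ≤ 2 * Real.sqrt m * (1 / ((m : ℝ) * m)) := by
          gcongr
          · exact abs_altSigmaRatio_le hm
          · linarith
      _ = 2 * (1 / (m : ℝ) ^ ((3 : ℝ) / 2)) := by
          rw [e]
          have := Real.mul_self_sqrt hm0.le
          field_simp
          linarith

/-- Partial summation for blocks of the series `∑ β(m)/(m²(m+1))`. -/
lemma abs_sum_Ioc_altSigmaRatio_sub_le {M L : ℕ} (hM : 1 ≤ M) (hL : M ≤ L) :
    |∑ m ∈ Ioc M L, altSigmaRatio m * (1 / ((m : ℝ) * (m + 1)))
        - altSigmaMean * (1 / (M + 1) - 1 / (L + 1))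
        - (∑ i ∈ Icc 1 L, altSigmaRatio i - altSigmaMean * L) * (1 / (((L : ℝ) + 1) * (L + 2)))
        + (∑ i ∈ Icc 1 M, altSigmaRatio i - altSigmaMean * M) * (1 / (((M : ℝ) + 1) * (M + 2)))|
      ≤ 4 / Real.sqrt M * (1 / (M + 2) - 1 / (L + 2)) := by
  have hM0 : (0 : ℝ) < M := by exact_mod_cast hM
  have hsM : 0 < Real.sqrt M := Real.sqrt_pos.2 hM0
  induction L, hL using Nat.le_induction with
  | base => simp
  | succ L hL ih =>
    set G := ∑ i ∈ Icc 1 (L + 1), altSigmaRatio i - altSigmaMean * ((L + 1 : ℕ) : ℝ) with hG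
    have hGb : |G| ≤ 2 * Real.sqrt ((L + 1 : ℕ) : ℝ) := abs_sum_altSigmaRatio_sub_le (by omega)
    have hG' : ∑ i ∈ Icc 1 L, altSigmaRatio i
        = G - altSigmaRatio (L + 1) + altSigmaMean * (L + 1) := by
      rw [hG, sum_Icc_succ_top (by omega)]
      push_cast
      ring
    have hterm : |G * (2 / (((L : ℝ) + 1) * (L + 2) * (L + 3)))|
        ≤ 4 / Real.sqrt M * (1 / (L + 2) - 1 / (L + 3)) := by
      have hs : Real.sqrt M ≤ Real.sqrt ((L + 1 : ℕ) : ℝ) :=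
        Real.sqrt_le_sqrt (by exact_mod_cast (by omega : M ≤ L + 1))
      set r := Real.sqrt ((L + 1 : ℕ) : ℝ) with hr
      have hrr : r * r = (L : ℝ) + 1 := by
        have := Real.mul_self_sqrt (show (0 : ℝ) ≤ ((L + 1 : ℕ) : ℝ) by positivity)
        rw [← hr] at this
        push_cast at this
        exact this
      have hr0 : 0 < r := lt_of_lt_of_le hsM hs
      rw [abs_mul, abs_of_pos (by positivity : 0 < 2 / (((L : ℝ) + 1) * (L + 2) * (L + 3)))]
      calc |G| * (2 / (((L : ℝ) + 1) * (L + 2) * (L + 3)))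
          ≤ (2 * r) * (2 / (((L : ℝ) + 1) * (L + 2) * (L + 3))) := by gcongr
        _ = 4 / r * (1 / (L + 2) - 1 / (L + 3)) := by
            rw [← hrr]
            field_simp
            ring
        _ ≤ _ := by
            have : (0 : ℝ) ≤ 1 / ((L : ℝ) + 2) - 1 / (L + 3) := by
              rw [sub_nonneg]
              apply one_div_le_one_div_of_le <;> linarith [(Nat.cast_nonneg L : (0 : ℝ) ≤ L)]
            gcongr
    have hsplit := (abs_add_le _ _).trans (add_le_add ih hterm)
    rw [sum_Ioc_succ_top (by omega)]
    rw [hG'] at hsplit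
    refine le_trans (le_of_eq ?_) (hsplit.trans (le_of_eq ?_))
    · congr 1
      push_cast
      field_simp
      ring
    · push_cast
      ring

/-- The tail of the series `∑ β(m)/(m²(m+1))`. -/
lemma abs_tsum_sub_le {M : ℕ} (hM : 1 ≤ M) :
    |∑' m : ℕ, altSigmaRatio m * (1 / ((m : ℝ) * (m + 1)))
        - ∑ m ∈ Icc 1 M, altSigmaRatio m * (1 / ((m : ℝ) * (m + 1)))
        - altSigmaMean * (1 / (M + 1))| ≤ 6 / (Real.sqrt M * M) := by
  have hM0 : (0 : ℝ) < M := by exact_mod_cast hM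
  have hsM : 0 < Real.sqrt M := Real.sqrt_pos.2 hM0
  have hMM := Real.mul_self_sqrt hM0.le
  have hlim := (((summable_altSigmaRatio_div.hasSum.tendsto_sum_nat.comp
    (tendsto_add_atTop_nat 1)).sub_const
      (∑ m ∈ Icc 1 M, altSigmaRatio m * (1 / ((m : ℝ) * (m + 1))))).sub_const
        (altSigmaMean * (1 / (M + 1)))).abs
  have hlim2 : Tendsto (fun L : ℕ => (|altSigmaMean| + 2) * (1 / ((L : ℝ) + 1))
      + 6 / (Real.sqrt M * M)) atTop (nhds ((|altSigmaMean| + 2) * 0 + 6 / (Real.sqrt M * M))) :=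
    (tendsto_one_div_add_atTop_nhds_zero_nat.const_mul _).add_const _
  rw [mul_zero, zero_add] at hlim2
  refine le_of_tendsto_of_tendsto hlim hlim2 ((eventually_ge_atTop M).mono fun L hL => ?_)
  simp only [Function.comp_apply]
  rw [range_succ_eq_sum_Icc _ (by simp [altSigmaRatio_zero]), ← sum_Icc_add_sum_Ioc _ hL,
    add_sub_cancel_left]
  have hL1 : 1 ≤ L := hM.trans hL
  have hL0 : (0 : ℝ) < L := by exact_mod_cast hL1
  have key := abs_sum_Ioc_altSigmaRatio_sub_le hM hL
  have gL := abs_sum_altSigmaRatio_sub_le hL1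
  have gM := abs_sum_altSigmaRatio_sub_le hM
  set gapL := ∑ i ∈ Icc 1 L, altSigmaRatio i - altSigmaMean * L
  set gapM := ∑ i ∈ Icc 1 M, altSigmaRatio i - altSigmaMean * M
  set tailSum := ∑ m ∈ Ioc M L, altSigmaRatio m * (1 / ((m : ℝ) * (m + 1)))
  have t1 : |gapL * (1 / (((L : ℝ) + 1) * (L + 2)))| ≤ 2 * (1 / ((L : ℝ) + 1)) := by
    rw [abs_mul, abs_of_pos (by positivity : 0 < 1 / (((L : ℝ) + 1) * (L + 2)))]
    have hs : Real.sqrt L ≤ L + 2 := by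
      rw [Real.sqrt_le_left (by positivity)]
      nlinarith
    calc |gapL| * (1 / (((L : ℝ) + 1) * (L + 2)))
        ≤ 2 * ((L : ℝ) + 2) * (1 / (((L : ℝ) + 1) * (L + 2))) := by gcongr; linarith
      _ = _ := by field_simp
  have t2 : |gapM * (1 / (((M : ℝ) + 1) * (M + 2)))| ≤ 2 / (Real.sqrt M * M) := by
    rw [abs_mul, abs_of_pos (by positivity : 0 < 1 / (((M : ℝ) + 1) * (M + 2)))]
    calc |gapM| * (1 / (((M : ℝ) + 1) * (M + 2)))
        ≤ 2 * Real.sqrt M * (1 / ((M : ℝ) * M)) := by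
          gcongr <;> linarith
      _ = _ := by
          nth_rewrite 2 [← hMM]
          field_simp
  have t3 : 4 / Real.sqrt M * (1 / ((M : ℝ) + 2) - 1 / (L + 2)) ≤ 4 / (Real.sqrt M * M) := by
    have h1 : (0 : ℝ) ≤ 1 / ((L : ℝ) + 2) := by positivity
    have h2 : 1 / ((M : ℝ) + 2) ≤ 1 / M := one_div_le_one_div_of_le hM0 (by linarith)
    calc _ ≤ 4 / Real.sqrt M * (1 / M) := by gcongr; linarith
      _ = _ := by field_simp
  have t4 : |altSigmaMean * (1 / ((L : ℝ) + 1))| = |altSigmaMean| * (1 / ((L : ℝ) + 1)) := by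
    rw [abs_mul, abs_of_pos (by positivity : 0 < 1 / ((L : ℝ) + 1))]
  have e6 : 6 / (Real.sqrt M * M) = 4 / (Real.sqrt M * M) + 2 / (Real.sqrt M * M) := by ring
  rw [e6]
  rw [abs_le] at key t1 t2 ⊢
  have t4' := abs_le.1 t4.le
  rw [mul_sub] at key
  constructor <;> linarith

lemma cast_natFloor_eq {t : ℝ} (ht : 0 ≤ t) : ((⌊t⌋₊ : ℕ) : ℝ) = t - 1 / 2 - sawtooth t := by
  rw [natCast_floor_eq_intCast_floor ht, sawtooth, ← Int.self_sub_floor]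
  ring

/-- Grouping the large `n` in `∑ φ(⌊x/n⌋)` by the value of `⌊x/n⌋`. -/
lemma sum_floor_div_split (φ : ℕ → ℝ) {x : ℝ} (hx : 0 ≤ x) (M : ℕ) :
    ∑ n ∈ Icc 1 ⌊x⌋₊, φ ⌊x / n⌋₊ = ∑ n ∈ Icc 1 ⌊x / ((M + 1 : ℕ) : ℝ)⌋₊, φ ⌊x / n⌋₊
      + ∑ m ∈ Icc 1 M, φ m * ((⌊x / m⌋₊ : ℝ) - ⌊x / ((m + 1 : ℕ) : ℝ)⌋₊) := by
  induction M with
  | zero => simp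
  | succ M ih =>
    have hle : ⌊x / ((M + 1 + 1 : ℕ) : ℝ)⌋₊ ≤ ⌊x / ((M + 1 : ℕ) : ℝ)⌋₊ := by
      apply Nat.floor_le_floor
      gcongr
      omega
    rw [ih, sum_Icc_succ_top (by omega), ← sum_Icc_add_sum_Ioc _ hle]
    have hconst : ∀ n ∈ Ioc ⌊x / ((M + 1 + 1 : ℕ) : ℝ)⌋₊ ⌊x / ((M + 1 : ℕ) : ℝ)⌋₊,
        φ ⌊x / n⌋₊ = φ (M + 1) := by
      intro n hn
      rw [mem_Ioc] at hn
      have hn0 : (0 : ℝ) < n := by exact_mod_cast (by omega : 0 < n)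
      congr 1
      rw [Nat.floor_eq_iff (by positivity)]
      have h1 := (Nat.floor_lt (by positivity)).1 hn.1
      have h2 := (Nat.le_floor_iff (by positivity)).1 hn.2
      rw [div_lt_iff₀ (by positivity)] at h1
      rw [le_div_iff₀ (by positivity)] at h2
      rw [le_div_iff₀ hn0, div_lt_iff₀ hn0]
      push_cast at *
      constructor <;> linarith
    rw [sum_congr rfl hconst, sum_const, Nat.card_Ioc, nsmul_eq_mul, Nat.cast_sub hle]
    ring

lemma ite_dvd_floor_eq {t : ℝ} (ht : 0 ≤ t) {d : ℕ} (hd : 1 ≤ d) :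
    (if d ∣ ⌊t⌋₊ then (1 : ℝ) else 0)
      = 1 / d + sawtooth ((t - 1) / d) - sawtooth (t / d) := by
  have hd0 : (0 : ℝ) < d := by exact_mod_cast hd
  set m := ⌊t⌋₊ with hm
  have hm1 : (m : ℝ) ≤ t := Nat.floor_le ht
  have hm2 : t < m + 1 := Nat.lt_floor_add_one t
  have hdiv := Nat.div_add_mod m d
  have hmod := Nat.mod_lt m hd
  set q := m / d
  set r := m % d
  have hdivr : (d : ℝ) * q + r = m := by exact_mod_cast hdiv
  have f1 : ⌊t / d⌋ = (q : ℤ) := by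
    rw [Int.floor_eq_iff, le_div_iff₀ hd0, div_lt_iff₀ hd0]
    have : (r : ℝ) + 1 ≤ d := by exact_mod_cast hmod
    have h0 : (0 : ℝ) ≤ r := by positivity
    push_cast
    constructor <;> nlinarith
  rw [sawtooth, sawtooth, ← Int.self_sub_floor, ← Int.self_sub_floor, f1]
  split_ifs with h
  · have hr : r = 0 := Nat.mod_eq_zero_of_dvd h
    rw [hr, Nat.cast_zero] at hdivr
    have f2 : ⌊(t - 1) / d⌋ = (q : ℤ) - 1 := by
      have : (1 : ℝ) ≤ d := by exact_mod_cast hd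
      rw [Int.floor_eq_iff, le_div_iff₀ hd0, div_lt_iff₀ hd0]
      push_cast
      constructor <;> nlinarith
    rw [f2]
    push_cast
    ring
  · have hr : 1 ≤ r := by
      rw [Nat.dvd_iff_mod_eq_zero] at h
      omega
    have f2 : ⌊(t - 1) / d⌋ = (q : ℤ) := by
      have h1 : (1 : ℝ) ≤ r := by exact_mod_cast hr
      have : (r : ℝ) + 1 ≤ d := by exact_mod_cast hmod
      rw [Int.floor_eq_iff, le_div_iff₀ hd0, div_lt_iff₀ hd0]
      push_cast
      constructor <;> nlinarith
    rw [f2]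
    push_cast
    ring

/-- The constant `ζ(4/3)`. -/
noncomputable def zetaFourThirds : ℝ := ∑' d : ℕ, 1 / (d : ℝ) ^ ((4 : ℝ) / 3)

lemma sum_one_div_rpow_le (s : Finset ℕ) :
    ∑ d ∈ s, 1 / (d : ℝ) ^ ((4 : ℝ) / 3) ≤ zetaFourThirds :=
  (Real.summable_one_div_nat_rpow.2 (by norm_num)).sum_le_tsum s fun _ _ => by positivity

lemma div_nat_rpow_third {z : ℝ} (hz : 0 ≤ z) (d : ℕ) :
    (z ^ 9 / d) ^ ((1 : ℝ) / 3) = z ^ 3 / (d : ℝ) ^ ((1 : ℝ) / 3) := by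
  rw [Real.div_rpow (by positivity) (by positivity), ← Real.rpow_natCast z 9, ← Real.rpow_mul hz,
    ← Real.rpow_natCast z 3]
  norm_num

lemma one_div_mul_div_rpow_third {d : ℕ} (hd : 1 ≤ d) (a : ℝ) :
    1 / (d : ℝ) * (a / (d : ℝ) ^ ((1 : ℝ) / 3)) = a * (1 / (d : ℝ) ^ ((4 : ℝ) / 3)) := by
  have hd0 : (0 : ℝ) < d := by exact_mod_cast hd
  rw [show (4 : ℝ) / 3 = 1 + 1 / 3 by norm_num, Real.rpow_add hd0, Real.rpow_one]
  field_simp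

lemma one_div_mul_self_le {d : ℕ} (hd : 1 ≤ d) :
    1 / (d : ℝ) * (1 / d) ≤ 1 / (d : ℝ) ^ ((4 : ℝ) / 3) := by
  have hd0 : (0 : ℝ) < d := by exact_mod_cast hd
  rw [one_div_mul_one_div_rev]
  apply one_div_le_one_div_of_le (by positivity)
  rw [← sq, ← Real.rpow_natCast]
  exact Real.rpow_le_rpow_of_exponent_le (by exact_mod_cast hd) (by norm_num)

/-- The sawtooth sums weighted by `β(m)/m`. -/
lemma abs_sum_altSigmaRatio_mul_sawtooth_le {z : ℝ} (hz : 1 ≤ z) (hx : 2 ≤ z ^ 9) {M : ℕ}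
    (hM : (M : ℝ) ≤ z ^ 5) :
    |∑ m ∈ Icc 1 M, altSigmaRatio m *
        (sawtooth (z ^ 9 / ((m + 1 : ℕ) : ℝ)) - sawtooth (z ^ 9 / m))|
      ≤ 3072 * zetaFourThirds * (z ^ 3 * Real.log (z ^ 9)) := by
  have hz0 : 0 < z := by linarith
  have hlog : 0 ≤ Real.log (z ^ 9) := Real.log_nonneg (by linarith)
  rw [sum_altSigmaRatio_mul
    (fun m => sawtooth (z ^ 9 / ((m + 1 : ℕ) : ℝ)) - sawtooth (z ^ 9 / m))]
  have hterm : ∀ d ∈ Icc 1 M, |liouvilleDiv d * ∑ k ∈ Icc 1 (M / d),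
      (sawtooth (z ^ 9 / ((d * k + 1 : ℕ) : ℝ)) - sawtooth (z ^ 9 / ((d * k : ℕ) : ℝ)))|
      ≤ 3072 * (z ^ 3 * Real.log (z ^ 9)) * (1 / (d : ℝ) ^ ((4 : ℝ) / 3)) := by
    intro d hd
    rw [mem_Icc] at hd
    have hd0 : (0 : ℝ) < d := by exact_mod_cast hd.1
    have hd1 : (1 : ℝ) ≤ d := by exact_mod_cast hd.1
    have hK : ((M / d : ℕ) : ℝ) ≤ z ^ 5 / d :=
      Nat.cast_div_le.trans (by gcongr)
    have hKx : ((M / d : ℕ) : ℝ) ≤ z ^ 9 :=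
      hK.trans ((div_le_self (by positivity) hd1).trans
        (pow_le_pow_right₀ hz (by norm_num)))
    have hy : 0 < z ^ 9 / d := by positivity
    have hroot : Real.sqrt (((M / d : ℕ) : ℝ) ^ 3 / (z ^ 9 / d)) ≤ z ^ 3 * (1 / d) := by
      rw [Real.sqrt_le_left (by positivity)]
      calc ((M / d : ℕ) : ℝ) ^ 3 / (z ^ 9 / d) ≤ (z ^ 5 / d) ^ 3 / (z ^ 9 / d) := by gcongr
        _ = (z ^ 3 * (1 / d)) ^ 2 := by field_simp
    have hbound : ∀ θ : ℝ, 0 ≤ θ → θ ≤ 1 →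
        |∑ k ∈ Icc 1 (M / d), sawtooth (z ^ 9 / d / (k + θ) + 0)|
          ≤ 768 * Real.log (z ^ 9) * (z ^ 3 / (d : ℝ) ^ ((1 : ℝ) / 3) + z ^ 3 * (1 / d)) := by
      intro θ h0 h1
      refine (abs_sum_sawtooth_div_le 0 hy h0 h1 hx hKx).trans ?_
      rw [div_nat_rpow_third hz0.le]
      gcongr
    have e1 : ∑ k ∈ Icc 1 (M / d),
        (sawtooth (z ^ 9 / ((d * k + 1 : ℕ) : ℝ)) - sawtooth (z ^ 9 / ((d * k : ℕ) : ℝ)))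
        = ∑ k ∈ Icc 1 (M / d), sawtooth (z ^ 9 / d / (k + 1 / (d : ℝ)) + 0)
          - ∑ k ∈ Icc 1 (M / d), sawtooth (z ^ 9 / d / (k + 0) + 0) := by
      rw [sum_sub_distrib]
      congr 1 <;> refine sum_congr rfl fun k _ => ?_
      · rw [add_zero, div_div, mul_add, mul_one_div_cancel hd0.ne']
        push_cast
        rfl
      · rw [add_zero, add_zero, div_div]
        push_cast
        rfl
    rw [e1, abs_mul, abs_liouvilleDiv]
    have b1 := hbound (1 / d) (by positivity) ((div_le_one hd0).2 hd1)
    have b2 := hbound 0 le_rfl zero_le_one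
    calc _ ≤ 1 / (d : ℝ) * (2 * (768 * Real.log (z ^ 9) *
            (z ^ 3 / (d : ℝ) ^ ((1 : ℝ) / 3) + z ^ 3 * (1 / d)))) := by
          gcongr
          refine (abs_sub _ _).trans ?_
          linarith
      _ = 1536 * Real.log (z ^ 9) * (1 / (d : ℝ) * (z ^ 3 / (d : ℝ) ^ ((1 : ℝ) / 3))
            + z ^ 3 * (1 / (d : ℝ) * (1 / d))) := by ring
      _ ≤ 1536 * Real.log (z ^ 9) * (z ^ 3 * (1 / (d : ℝ) ^ ((4 : ℝ) / 3))
            + z ^ 3 * (1 / (d : ℝ) ^ ((4 : ℝ) / 3))) := by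
          rw [one_div_mul_div_rpow_third hd.1]
          gcongr
          exact one_div_mul_self_le hd.1
      _ = _ := by ring
  refine (abs_sum_le_sum_abs _ _).trans ((sum_le_sum hterm).trans ?_)
  rw [← mul_sum]
  calc _ ≤ 3072 * (z ^ 3 * Real.log (z ^ 9)) * zetaFourThirds := by
        gcongr
        exact sum_one_div_rpow_le _
    _ = _ := by ring

lemma sum_one_div_sqrt_le (D : ℕ) : ∑ d ∈ Icc 1 D, 1 / Real.sqrt d ≤ 2 * Real.sqrt D := by
  induction D with
  | zero => simp
  | succ D ih =>
    rw [sum_Icc_succ_top (by omega)]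
    have h1 : Real.sqrt D ≤ Real.sqrt ((D + 1 : ℕ) : ℝ) :=
      Real.sqrt_le_sqrt (by push_cast; linarith)
    have h0 : 0 < Real.sqrt ((D + 1 : ℕ) : ℝ) := Real.sqrt_pos.2 (by positivity)
    have e1 := Real.mul_self_sqrt (show (0 : ℝ) ≤ ((D + 1 : ℕ) : ℝ) by positivity)
    have e2 := Real.mul_self_sqrt (show (0 : ℝ) ≤ (D : ℝ) by positivity)
    set a := Real.sqrt ((D + 1 : ℕ) : ℝ)
    set b := Real.sqrt D
    have hb : 0 ≤ b := Real.sqrt_nonneg _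
    have : 1 / a ≤ 2 * a - 2 * b := by
      rw [div_le_iff₀ h0]
      push_cast at e1
      nlinarith [sq_nonneg (a - b)]
    linarith

/-- The sawtooth sums arising from small divisors of `⌊x/n⌋`. -/
lemma abs_sum_liouvilleDiv_mul_sawtooth_le {z : ℝ} (hz : 1 ≤ z) (hx : 2 ≤ z ^ 9) {N D : ℕ}
    (hN : (N : ℝ) ≤ z ^ 4) (hD : (D : ℝ) ≤ z ^ 3) :
    |∑ d ∈ Icc 1 D, liouvilleDiv d * ∑ n ∈ Icc 1 N,
        (sawtooth ((z ^ 9 / n - 1) / d) - sawtooth (z ^ 9 / n / d))|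
      ≤ (1536 * zetaFourThirds + 3072) * (z ^ 3 * Real.log (z ^ 9)) := by
  have hz0 : 0 < z := by linarith
  have hlog : 0 ≤ Real.log (z ^ 9) := Real.log_nonneg (by linarith)
  have hs0 : 0 ≤ Real.sqrt (z ^ 3) := Real.sqrt_nonneg _
  have hNx : (N : ℝ) ≤ z ^ 9 := hN.trans (pow_le_pow_right₀ hz (by norm_num))
  have hterm : ∀ d ∈ Icc 1 D, |liouvilleDiv d * ∑ n ∈ Icc 1 N,
        (sawtooth ((z ^ 9 / n - 1) / d) - sawtooth (z ^ 9 / n / d))|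
      ≤ 1536 * Real.log (z ^ 9) * (z ^ 3 * (1 / (d : ℝ) ^ ((4 : ℝ) / 3))
            + Real.sqrt (z ^ 3) * (1 / Real.sqrt d)) := by
    intro d hd
    rw [mem_Icc] at hd
    have hd0 : (0 : ℝ) < d := by exact_mod_cast hd.1
    have hsd : 0 < Real.sqrt d := Real.sqrt_pos.2 hd0
    have hdd := Real.mul_self_sqrt hd0.le
    have hy : 0 < z ^ 9 / d := by positivity
    have hroot : Real.sqrt ((N : ℝ) ^ 3 / (z ^ 9 / d)) ≤ Real.sqrt (z ^ 3) * Real.sqrt d := by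
      rw [← Real.sqrt_mul (by positivity)]
      apply Real.sqrt_le_sqrt
      calc (N : ℝ) ^ 3 / (z ^ 9 / d) ≤ (z ^ 4) ^ 3 / (z ^ 9 / d) := by gcongr
        _ = z ^ 3 * d := by field_simp
    have hbound : ∀ c : ℝ, |∑ n ∈ Icc 1 N, sawtooth (z ^ 9 / d / (n + 0) + c)|
          ≤ 768 * Real.log (z ^ 9) * (z ^ 3 / (d : ℝ) ^ ((1 : ℝ) / 3)
            + Real.sqrt (z ^ 3) * Real.sqrt d) := by
      intro c
      refine (abs_sum_sawtooth_div_le c hy le_rfl zero_le_one hx hNx).trans ?_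
      rw [div_nat_rpow_third hz0.le]
      gcongr
    have e1 : ∑ n ∈ Icc 1 N, (sawtooth ((z ^ 9 / n - 1) / d) - sawtooth (z ^ 9 / n / d))
        = ∑ n ∈ Icc 1 N, sawtooth (z ^ 9 / d / (n + 0) + -(1 / d))
          - ∑ n ∈ Icc 1 N, sawtooth (z ^ 9 / d / (n + 0) + 0) := by
      rw [sum_sub_distrib]
      congr 1 <;>
      · refine sum_congr rfl fun k _ => ?_
        congr 1
        rw [add_zero, div_right_comm (z ^ 9)]
        ring
    rw [e1, abs_mul, abs_liouvilleDiv]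
    have b1 := hbound (-(1 / d))
    have b2 := hbound 0
    calc _ ≤ 1 / (d : ℝ) * (2 * (768 * Real.log (z ^ 9) *
            (z ^ 3 / (d : ℝ) ^ ((1 : ℝ) / 3) + Real.sqrt (z ^ 3) * Real.sqrt d))) := by
          gcongr
          refine (abs_sub _ _).trans ?_
          linarith
      _ = 1536 * Real.log (z ^ 9) * (1 / (d : ℝ) * (z ^ 3 / (d : ℝ) ^ ((1 : ℝ) / 3))
            + Real.sqrt (z ^ 3) * (1 / (d : ℝ) * Real.sqrt d)) := by ring
      _ = _ := by
          rw [one_div_mul_div_rpow_third hd.1]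
          congr 3
          nth_rewrite 1 [← hdd]
          field_simp
  refine (abs_sum_le_sum_abs _ _).trans ((sum_le_sum hterm).trans ?_)
  rw [← mul_sum, sum_add_distrib, ← mul_sum, ← mul_sum]
  have hsD : Real.sqrt D ≤ Real.sqrt (z ^ 3) := Real.sqrt_le_sqrt hD
  calc _ ≤ 1536 * Real.log (z ^ 9) * (z ^ 3 * zetaFourThirds
          + Real.sqrt (z ^ 3) * (2 * Real.sqrt (z ^ 3))) := by
        gcongr
        · exact sum_one_div_rpow_le _
        · exact (sum_one_div_sqrt_le D).trans (by gcongr)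
    _ = 1536 * Real.log (z ^ 9) * (z ^ 3 * zetaFourThirds
          + 2 * (Real.sqrt (z ^ 3) * Real.sqrt (z ^ 3))) := by ring
    _ = _ := by
        rw [Real.mul_self_sqrt (by positivity)]
        ring

/-- Distinct small `n` give distinct values of `⌊x/n⌋`. -/
lemma floor_div_lt_floor_div {x : ℝ} {n k : ℕ} (hn : 1 ≤ n) (hnk : n < k)
    (hx : (n : ℝ) * k ≤ x) : ⌊x / k⌋₊ < ⌊x / n⌋₊ := by
  have hn0 : (0 : ℝ) < n := by exact_mod_cast hn
  have hk0 : (0 : ℝ) < k := by exact_mod_cast hn.trans hnk.le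
  have hx0 : 0 ≤ x := le_trans (by positivity) hx
  have hk1 : (n : ℝ) + 1 ≤ k := by exact_mod_cast hnk
  rw [← Nat.add_one_le_iff, ← Nat.floor_add_one (by positivity)]
  apply Nat.floor_le_floor
  rw [div_add_one hk0.ne', div_le_div_iff₀ hk0 hn0]
  nlinarith

lemma card_filter_dvd_floor_le {x y : ℝ} {D N d : ℕ} (hd : 1 ≤ d) (hN : (N : ℝ) ^ 2 ≤ x)
    (hy : ∀ n ∈ Ioc D N, x / n ≤ y) (hy0 : 0 ≤ y) :
    (#((Ioc D N).filter fun n : ℕ => d ∣ ⌊x / (n : ℝ)⌋₊) : ℝ) ≤ y / d := by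
  have hd0 : (0 : ℝ) < d := by exact_mod_cast hd
  have hmul : ∀ n ∈ Ioc D N, ∀ k ∈ Ioc D N, (n : ℝ) * k ≤ x := by
    intro n hn k hk
    rw [mem_Ioc] at hn hk
    have h1 : (n : ℝ) ≤ N := by exact_mod_cast hn.2
    have h2 : (k : ℝ) ≤ N := by exact_mod_cast hk.2
    calc (n : ℝ) * k ≤ N * N := by gcongr
      _ ≤ x := by rw [← sq]; exact hN
  have hcard : #((Ioc D N).filter fun n : ℕ => d ∣ ⌊x / (n : ℝ)⌋₊) ≤ #{m ∈ Ioc 0 ⌊y⌋₊ | d ∣ m} := by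
    refine card_le_card_of_injOn (fun n => ⌊x / (n : ℝ)⌋₊) ?_ ?_
    · intro n hn
      simp only [coe_filter, Set.mem_ofPred_eq] at hn ⊢
      refine ⟨mem_Ioc.2 ⟨?_, Nat.floor_le_floor (hy n hn.1)⟩, hn.2⟩
      have hn1 : 1 ≤ n := by have := mem_Ioc.1 hn.1; omega
      have hn0 : (1 : ℝ) ≤ n := by exact_mod_cast hn1
      rw [Nat.floor_pos, le_div_iff₀ (by linarith)]
      have := hmul n hn.1 n hn.1
      nlinarith
    · intro n hn k hk hnk
      simp only [coe_filter, Set.mem_ofPred_eq] at hn hk hnk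
      have hn1 : 1 ≤ n := by have := mem_Ioc.1 hn.1; omega
      have hk1 : 1 ≤ k := by have := mem_Ioc.1 hk.1; omega
      rcases lt_trichotomy n k with h | h | h
      · exact absurd hnk (floor_div_lt_floor_div hn1 h (hmul n hn.1 k hk.1)).ne'
      · exact h
      · exact absurd hnk (floor_div_lt_floor_div hk1 h (hmul k hk.1 n hn.1)).ne
  rw [Nat.Ioc_filter_dvd_card_eq_div] at hcard
  calc (#((Ioc D N).filter fun n : ℕ => d ∣ ⌊x / (n : ℝ)⌋₊) : ℝ) ≤ ((⌊y⌋₊ / d : ℕ) : ℝ) := by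
        exact_mod_cast hcard
    _ ≤ (⌊y⌋₊ : ℝ) / d := Nat.cast_div_le
    _ ≤ y / d := by gcongr; exact Nat.floor_le hy0

/-- The contribution of large divisors of `⌊x/n⌋`. -/
lemma abs_sum_large_divisors_le {z : ℝ} (hz : 1 ≤ z) {N D X : ℕ} (hN : (N : ℝ) ≤ z ^ 4)
    (hD : D = ⌊z ^ 3⌋₊) (hX : (X : ℝ) ≤ z ^ 9) (hX1 : 1 ≤ X) :
    |∑ n ∈ Icc 1 N, ∑ d ∈ Ioc D X, if d ∣ ⌊z ^ 9 / (n : ℝ)⌋₊ then liouvilleDiv d else 0|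
      ≤ z ^ 3 * (1 + Real.log (z ^ 9)) + 2 * z ^ 3 := by
  have hz0 : 0 < z := by linarith
  have hz3 : 1 ≤ z ^ 3 := one_le_pow₀ hz
  have hD1 : 1 ≤ D := hD ▸ (Nat.one_le_floor_iff _).2 hz3
  have hDle : (D : ℝ) ≤ z ^ 3 := hD ▸ Nat.floor_le (by positivity)
  have hDlt : z ^ 3 < D + 1 := hD ▸ Nat.lt_floor_add_one _
  have hD0 : (1 : ℝ) ≤ D := by exact_mod_cast hD1
  set r : ℕ → ℝ := fun n => ∑ d ∈ Ioc D X, if d ∣ ⌊z ^ 9 / (n : ℝ)⌋₊ then 1 / (d : ℝ) else 0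
    with hr
  have hr0 : ∀ n, 0 ≤ r n := fun n => sum_nonneg fun d _ => by split_ifs <;> positivity
  have hrle : ∀ n, r n ≤ 1 + Real.log (z ^ 9) := fun n =>
    calc r n ≤ ∑ d ∈ Ioc D X, 1 / (d : ℝ) := sum_le_sum fun d _ => by
          split_ifs
          · exact le_rfl
          · positivity
      _ ≤ ∑ d ∈ Icc 1 X, 1 / (d : ℝ) :=
          sum_le_sum_of_subset_of_nonneg (fun d hd => by
            rw [mem_Ioc] at hd
            rw [mem_Icc]
            omega) fun _ _ _ => by positivity
      _ ≤ 1 + Real.log X := sum_one_div_le_one_add_log X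
      _ ≤ _ := by
          have : (0 : ℝ) < X := by exact_mod_cast hX1
          gcongr
  have hsmall : ∑ n ∈ Icc 1 D, r n ≤ z ^ 3 * (1 + Real.log (z ^ 9)) := by
    refine (sum_le_card_nsmul _ _ _ fun n _ => hrle n).trans ?_
    rw [Nat.card_Icc, nsmul_eq_mul, Nat.add_sub_cancel]
    have := (hr0 1).trans (hrle 1)
    gcongr
  have hlarge : ∑ n ∈ Ioc D N, r n ≤ 2 * z ^ 3 := by
    rw [hr, sum_comm]
    have hN2 : (N : ℝ) ^ 2 ≤ z ^ 9 :=
      calc (N : ℝ) ^ 2 ≤ (z ^ 4) ^ 2 := by gcongr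
        _ = z ^ 8 := by ring
        _ ≤ z ^ 9 := pow_le_pow_right₀ hz (by norm_num)
    have hy : ∀ n ∈ Ioc D N, z ^ 9 / (n : ℝ) ≤ z ^ 6 := by
      intro n hn
      rw [mem_Ioc] at hn
      have h1 : (D : ℝ) + 1 ≤ n := by exact_mod_cast hn.1
      rw [div_le_iff₀ (by linarith)]
      calc z ^ 9 = z ^ 6 * z ^ 3 := by ring
        _ ≤ z ^ 6 * n := by gcongr; linarith
    have hterm : ∀ d ∈ Ioc D X,
        ∑ n ∈ Ioc D N, (if d ∣ ⌊z ^ 9 / (n : ℝ)⌋₊ then 1 / (d : ℝ) else 0)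
          ≤ z ^ 6 * (1 / (d : ℝ) ^ 2) := by
      intro d hd
      have hd1 : 1 ≤ d := by have := mem_Ioc.1 hd; omega
      rw [← sum_filter, sum_const, nsmul_eq_mul]
      calc _ ≤ z ^ 6 / d * (1 / (d : ℝ)) := by
            gcongr
            exact card_filter_dvd_floor_le hd1 hN2 hy (by positivity)
        _ = _ := by ring
    refine (sum_le_sum hterm).trans ?_
    rw [← mul_sum]
    calc _ ≤ z ^ 6 * (1 / (D : ℝ)) := by
          gcongr
          exact sum_Ioc_one_div_sq_le hD1
      _ ≤ 2 * z ^ 3 := by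
          rw [mul_one_div, div_le_iff₀ (by linarith)]
          calc z ^ 6 = z ^ 3 * z ^ 3 := by ring
            _ ≤ z ^ 3 * (2 * D) := by gcongr; linarith
            _ = _ := by ring
  calc _ ≤ ∑ n ∈ Icc 1 N, r n := by
        refine (abs_sum_le_sum_abs _ _).trans (sum_le_sum fun n _ => ?_)
        refine (abs_sum_le_sum_abs _ _).trans (sum_le_sum fun d _ => ?_)
        split_ifs
        · exact (abs_liouvilleDiv d).le
        · exact abs_zero.le
    _ ≤ ∑ n ∈ Icc 1 D ∪ Ioc D N, r n :=
        sum_le_sum_of_subset_of_nonneg (fun n hn => by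
          rw [mem_Icc] at hn
          rw [mem_union, mem_Icc, mem_Ioc]
          omega) fun n _ _ => hr0 n
    _ = ∑ n ∈ Icc 1 D, r n + ∑ n ∈ Ioc D N, r n :=
        sum_union (disjoint_left.2 fun n h1 h2 => by
          rw [mem_Icc] at h1
          rw [mem_Ioc] at h2
          omega)
    _ ≤ _ := add_le_add hsmall hlarge

/-- The mean value of `β(⌊x/n⌋)/⌊x/n⌋` over short initial ranges of `n`. -/
lemma abs_sum_altSigmaRatio_floor_sub_le {z : ℝ} (hz : 1 ≤ z) (hx : 2 ≤ z ^ 9) {N : ℕ}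
    (hN : (N : ℝ) ≤ z ^ 4) :
    |∑ n ∈ Icc 1 N, altSigmaRatio ⌊z ^ 9 / (n : ℝ)⌋₊ - altSigmaMean * N|
      ≤ (1536 * zetaFourThirds + 3073) * (z ^ 3 * Real.log (z ^ 9)) + 5 * z ^ 3 := by
  have hz0 : 0 < z := by linarith
  set D := ⌊z ^ 3⌋₊ with hD
  set X := ⌊z ^ 9⌋₊ with hX
  have hz3 : 1 ≤ z ^ 3 := one_le_pow₀ hz
  have hD1 : 1 ≤ D := (Nat.one_le_floor_iff _).2 hz3
  have hDX : D ≤ X := Nat.floor_le_floor (pow_le_pow_right₀ hz (by norm_num))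
  have hDle : (D : ℝ) ≤ z ^ 3 := Nat.floor_le (by positivity)
  have hDlt : z ^ 3 < D + 1 := Nat.lt_floor_add_one _
  have hD0 : (1 : ℝ) ≤ D := by exact_mod_cast hD1
  have hsaw := abs_sum_liouvilleDiv_mul_sawtooth_le hz hx hN hDle
  have hlarge := abs_sum_large_divisors_le hz hN hD (Nat.floor_le (by positivity) : (X : ℝ) ≤ _)
    (hD1.trans hDX)
  have hmean : |(altSigmaMean - ∑ d ∈ Icc 1 D, liouvilleDiv d / d) * N| ≤ 2 * z ^ 3 := by
    rw [abs_mul, Nat.abs_cast]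
    calc _ ≤ 1 / (D : ℝ) * z ^ 4 := by
          gcongr
          exact abs_altSigmaMean_sub_le hD1
      _ ≤ 2 * z ^ 3 := by
          rw [one_div_mul_eq_div, div_le_iff₀ (by linarith)]
          calc z ^ 4 ≤ z ^ 3 * z ^ 3 := by
                rw [← pow_add]
                exact pow_le_pow_right₀ hz (by norm_num)
            _ ≤ z ^ 3 * (2 * D) := by gcongr; linarith
            _ = _ := by ring
  have hsplit : ∑ n ∈ Icc 1 N, altSigmaRatio ⌊z ^ 9 / (n : ℝ)⌋₊
      = (∑ d ∈ Icc 1 D, liouvilleDiv d / d) * N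
        + ∑ d ∈ Icc 1 D, liouvilleDiv d * ∑ n ∈ Icc 1 N,
          (sawtooth ((z ^ 9 / n - 1) / d) - sawtooth (z ^ 9 / n / d))
        + ∑ n ∈ Icc 1 N, ∑ d ∈ Ioc D X,
          if d ∣ ⌊z ^ 9 / (n : ℝ)⌋₊ then liouvilleDiv d else 0 := by
    have h1 : ∀ n ∈ Icc 1 N, altSigmaRatio ⌊z ^ 9 / (n : ℝ)⌋₊
        = ∑ d ∈ Icc 1 D, liouvilleDiv d * (1 / d
            + (sawtooth ((z ^ 9 / n - 1) / d) - sawtooth (z ^ 9 / n / d)))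
          + ∑ d ∈ Ioc D X, if d ∣ ⌊z ^ 9 / (n : ℝ)⌋₊ then liouvilleDiv d else 0 := by
      intro n hn
      rw [mem_Icc] at hn
      have hn1 : (1 : ℝ) ≤ n := by exact_mod_cast hn.1
      have hnN : (n : ℝ) ≤ N := by exact_mod_cast hn.2
      have hnx : (n : ℝ) ≤ z ^ 9 := (hnN.trans hN).trans (pow_le_pow_right₀ hz (by norm_num))
      rw [altSigmaRatio_eq_sum_ite (M := X), ← sum_Icc_add_sum_Ioc _ hDX]
      · congr 1
        refine sum_congr rfl fun d hd => ?_
        rw [← add_sub_assoc, ← ite_dvd_floor_eq (by positivity) (mem_Icc.1 hd).1, mul_ite,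
          mul_one, mul_zero]
      · rw [Nat.one_le_floor_iff, le_div_iff₀ (by linarith), one_mul]
        exact hnx
      · exact Nat.floor_le_floor (div_le_self (by positivity) hn1)
    rw [sum_congr rfl h1, sum_add_distrib, sum_comm, sum_mul, ← sum_add_distrib]
    congr 1
    refine sum_congr rfl fun d _ => ?_
    rw [← mul_sum, sum_add_distrib, sum_const, Nat.card_Icc, nsmul_eq_mul, Nat.add_sub_cancel]
    ring
  rw [hsplit]
  rw [abs_le] at *
  constructor <;> linarith

/-- The explicit form of the asymptotic formula, in terms of `z = x^{1/9}`. -/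
lemma abs_sum_altSigmaRatio_floor_div_sub_le {z : ℝ} (hz : 1 ≤ z) (hx : 2 ≤ z ^ 9) :
    |∑ n ∈ Icc 1 ⌊z ^ 9⌋₊, altSigmaRatio ⌊z ^ 9 / (n : ℝ)⌋₊
        - z ^ 9 * ∑' m : ℕ, altSigmaRatio m * (1 / ((m : ℝ) * (m + 1)))|
      ≤ (4608 * zetaFourThirds + 3073) * (z ^ 3 * Real.log (z ^ 9))
        + (|altSigmaMean| + 29) * z ^ 3 := by
  have hz0 : 0 < z := by linarith
  have hz3 : 1 ≤ z ^ 3 := one_le_pow₀ hz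
  have hz5 : 1 ≤ z ^ 5 := one_le_pow₀ hz
  set M := ⌊z ^ 5⌋₊ with hM
  set N := ⌊z ^ 9 / ((M + 1 : ℕ) : ℝ)⌋₊ with hN
  have hM1 : 1 ≤ M := (Nat.one_le_floor_iff _).2 hz5
  have hM1' : (1 : ℝ) ≤ M := by exact_mod_cast hM1
  have hMle : (M : ℝ) ≤ z ^ 5 := Nat.floor_le (by positivity)
  have hMlt : z ^ 5 < M + 1 := Nat.lt_floor_add_one _
  have hNle : (N : ℝ) ≤ z ^ 9 / (M + 1) := by
    have := Nat.floor_le (show 0 ≤ z ^ 9 / ((M + 1 : ℕ) : ℝ) by positivity)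
    rw [← hN] at this
    exact_mod_cast this
  have hNlt : z ^ 9 / (M + 1) < N + 1 := by
    have := Nat.lt_floor_add_one (z ^ 9 / ((M + 1 : ℕ) : ℝ))
    rw [← hN] at this
    exact_mod_cast this
  have hNz : (N : ℝ) ≤ z ^ 4 := by
    refine hNle.trans ?_
    rw [div_le_iff₀ (by positivity)]
    calc z ^ 9 = z ^ 4 * z ^ 5 := by ring
      _ ≤ z ^ 4 * (M + 1) := by gcongr
  have hlargeM := abs_sum_altSigmaRatio_mul_sawtooth_le hz hx hMle
  have hsmallN := abs_sum_altSigmaRatio_floor_sub_le hz hx hNz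
  have hround : |altSigmaMean * (N - z ^ 9 / (M + 1))| ≤ |altSigmaMean| * z ^ 3 := by
    rw [abs_mul]
    gcongr
    rw [abs_le]
    constructor <;> linarith
  have htail : |z ^ 9 * (∑' m : ℕ, altSigmaRatio m * (1 / ((m : ℝ) * (m + 1)))
        - ∑ m ∈ Icc 1 M, altSigmaRatio m * (1 / ((m : ℝ) * (m + 1)))
        - altSigmaMean * (1 / (M + 1)))| ≤ 24 * z ^ 3 := by
    rw [abs_mul, abs_of_pos (by positivity : 0 < z ^ 9)]
    have hM2 : z ^ 4 / 2 ≤ M := by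
      have : z ^ 4 ≤ z ^ 5 := pow_le_pow_right₀ hz (by norm_num)
      linarith
    have hsq : z ^ 2 / 2 ≤ Real.sqrt M := by
      apply Real.le_sqrt_of_sq_le
      have : 0 < z ^ 4 := by positivity
      calc (z ^ 2 / 2) ^ 2 = z ^ 4 / 4 := by ring
        _ ≤ (M : ℝ) := by linarith
    calc _ ≤ z ^ 9 * (6 / (Real.sqrt M * M)) := by
          gcongr
          exact abs_tsum_sub_le hM1
      _ ≤ z ^ 9 * (6 / (z ^ 2 / 2 * (z ^ 4 / 2))) := by gcongr
      _ = 24 * z ^ 3 := by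
          field_simp
          ring
  have hgroup : ∑ m ∈ Icc 1 M, altSigmaRatio m *
        ((⌊z ^ 9 / m⌋₊ : ℝ) - ⌊z ^ 9 / ((m + 1 : ℕ) : ℝ)⌋₊)
      = z ^ 9 * ∑ m ∈ Icc 1 M, altSigmaRatio m * (1 / ((m : ℝ) * (m + 1)))
        + ∑ m ∈ Icc 1 M, altSigmaRatio m *
          (sawtooth (z ^ 9 / ((m + 1 : ℕ) : ℝ)) - sawtooth (z ^ 9 / m)) := by
    rw [mul_sum, ← sum_add_distrib]
    refine sum_congr rfl fun m hm => ?_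
    have hm0 : (0 : ℝ) < m := by exact_mod_cast (mem_Icc.1 hm).1
    rw [cast_natFloor_eq (by positivity), cast_natFloor_eq (by positivity)]
    have e : z ^ 9 / m - z ^ 9 / ((m + 1 : ℕ) : ℝ) = z ^ 9 * (1 / ((m : ℝ) * (m + 1))) := by
      push_cast
      field_simp
      ring
    linear_combination altSigmaRatio m * e
  rw [sum_floor_div_split altSigmaRatio (by positivity) M, hgroup, ← hN]
  rw [mul_sub, mul_sub, ← mul_assoc, mul_comm (z ^ 9) altSigmaMean, mul_assoc, mul_one_div]
    at htail
  rw [mul_sub] at hround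
  rw [abs_le] at *
  constructor <;> linarith

/-- `∑_{n ≤ x} β(⌊x/n⌋)/⌊x/n⌋ = x ∑_{m ≥ 1} β(m)/(m²(m+1)) + O(x^{1/3} log x)`. -/
theorem sum_altSigma_ratio_floor_div :
    (fun x : ℝ =>
        (∑ n ∈ Finset.Icc 1 ⌊x⌋₊,
          altSigma ⌊x / (n : ℝ)⌋₊ / (⌊x / (n : ℝ)⌋₊ : ℝ)) -
        x * ∑' m : ℕ, altSigma m / (m ^ 2 * (m + 1)))
    =O[atTop] fun x : ℝ => x ^ ((1 : ℝ) / 3) * Real.log x := by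
  have hterm : ∀ m : ℕ, altSigma m / ((m : ℝ) ^ 2 * (m + 1))
      = altSigmaRatio m * (1 / ((m : ℝ) * (m + 1))) := fun m => by
    rw [altSigmaRatio, div_mul_div_comm, mul_one]
    ring
  simp only [hterm]
  change (fun x : ℝ => ∑ n ∈ Icc 1 ⌊x⌋₊, altSigmaRatio ⌊x / (n : ℝ)⌋₊
    - x * ∑' m : ℕ, altSigmaRatio m * (1 / ((m : ℝ) * (m + 1)))) =O[atTop] _
  refine Asymptotics.IsBigO.of_bound
    (4608 * zetaFourThirds + 3073 + (|altSigmaMean| + 29)) ?_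
  filter_upwards [eventually_ge_atTop (Real.exp 1)] with x hx
  have hx2 : 2 ≤ x := by linarith [Real.add_one_le_exp 1]
  have hlog : 1 ≤ Real.log x := (Real.le_log_iff_exp_le (by linarith)).2 hx
  have hz : 1 ≤ x ^ ((1 : ℝ) / 9) := Real.one_le_rpow (by linarith) (by norm_num)
  have hz9 : (x ^ ((1 : ℝ) / 9)) ^ 9 = x := by
    rw [← Real.rpow_natCast, ← Real.rpow_mul (by linarith)]
    norm_num
  have hz3 : (x ^ ((1 : ℝ) / 9)) ^ 3 = x ^ ((1 : ℝ) / 3) := by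
    rw [← Real.rpow_natCast, ← Real.rpow_mul (by linarith)]
    norm_num
  have h := abs_sum_altSigmaRatio_floor_div_sub_le hz (hz9.symm ▸ hx2)
  rw [hz9, hz3] at h
  have h3 : 0 ≤ x ^ ((1 : ℝ) / 3) := by positivity
  have hmul : 0 ≤ x ^ ((1 : ℝ) / 3) * Real.log x := mul_nonneg h3 (by linarith)
  rw [Real.norm_eq_abs, Real.norm_eq_abs, abs_of_nonneg hmul]
  refine h.trans ?_
  rw [add_mul _ (|altSigmaMean| + 29)]
  gcongr
  exact le_mul_of_one_le_right h3 hlog
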